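/- For every integer n ≥ 2, the triply-refined ASM generating function satisfies: y(z2−z1)·z3·Ztri_n(x,y;z1,z2,z3)·Z_{n−1}(x,y) = (z1−1)((z2−1)(z3−1)−y·z2·z3)·Zadj_n(x,y;z1,z3)·Z_{n−1}(x,y;z2) − (z2−1)(x(z1−1)(z3−1)−y)·z1·z3·Zbaradj_n(x,y;z2,z3)·Z_{n−1}(x,y;z1) − (z1−1)(z2−1)(z3−1)·Z_{n−1}(x,y;z2)·Z_{n−1}(x,y) + (z1−1)(z2−1)(z3−1)·z1·z2^{n−1}·(x·z3)^n·Z_{n−1}(x,y;z1)·Z_{n−1}(x,y), as an identity of polynomials in ℤ[x,y,z1,z2,z3]. -/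

import Mathlib

open Finset

/-- The `n × n` integer matrix encoded by `e`, with entries in `{-1, 0, 1}`. -/
def asmMat {n : ℕ} (e : Fin n → Fin n → Fin 3) : Fin n → Fin n → ℤ :=
  fun i j => (e i j : ℤ) - 1

/-- `A` is an alternating sign matrix: all entries lie in `{-1, 0, 1}`, every
partial row sum and every partial column sum is `0` or `1` (equivalently, the
nonzero entries of each row and of each column alternate in sign), and every
complete row sum and column sum is `1`. -/
def IsASM {n : ℕ} (A : Fin n → Fin n → ℤ) : Prop :=
  (∀ i j, A i j = -1 ∨ A i j = 0 ∨ A i j = 1) ∧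
  (∀ (i j : Fin n), (∑ j' ∈ univ.filter (fun j' : Fin n => j' ≤ j), A i j') = 0 ∨
    (∑ j' ∈ univ.filter (fun j' : Fin n => j' ≤ j), A i j') = 1) ∧
  (∀ (i j : Fin n), (∑ i' ∈ univ.filter (fun i' : Fin n => i' ≤ i), A i' j) = 0 ∨
    (∑ i' ∈ univ.filter (fun i' : Fin n => i' ≤ i), A i' j) = 1) ∧
  (∀ i : Fin n, (∑ j, A i j) = 1) ∧
  (∀ j : Fin n, (∑ i, A i j) = 1)

/-- `ν(A)`, the number of generalized inversions of `A`. -/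
def nuASM {n : ℕ} (A : Fin n → Fin n → ℤ) : ℕ :=
  (∑ i : Fin n, ∑ i' : Fin n, ∑ j : Fin n, ∑ j' : Fin n,
      if i < i' ∧ j' ≤ j then A i j * A i' j' else 0).toNat

/-- `μ(A)`, the number of entries of `A` equal to `-1`. -/
def muASM {n : ℕ} (A : Fin n → Fin n → ℤ) : ℕ :=
  (univ.filter (fun p : Fin n × Fin n => A p.1 p.2 = -1)).card

/-- `ρT(A)`, the number of `0`'s to the left of the `1` in the top row of `A`. -/
def rhoT {n : ℕ} (A : Fin n → Fin n → ℤ) : ℕ :=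
  (univ.filter (fun j : Fin n =>
    A ⟨0, j.pos⟩ j = 0 ∧ ∃ j' : Fin n, j < j' ∧ A ⟨0, j.pos⟩ j' = 1)).card

/-- `ρR(A)`, the number of `0`'s below the `1` in the right-most column of `A`. -/
def rhoR {n : ℕ} (A : Fin n → Fin n → ℤ) : ℕ :=
  (univ.filter (fun i : Fin n =>
    A i ⟨n - 1, Nat.sub_lt i.pos Nat.one_pos⟩ = 0 ∧
      ∃ i' : Fin n, i' < i ∧ A i' ⟨n - 1, Nat.sub_lt i.pos Nat.one_pos⟩ = 1)).card

/-- `ρB(A)`, the number of `0`'s to the right of the `1` in the bottom row of `A`. -/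
def rhoB {n : ℕ} (A : Fin n → Fin n → ℤ) : ℕ :=
  (univ.filter (fun j : Fin n =>
    A ⟨n - 1, Nat.sub_lt j.pos Nat.one_pos⟩ j = 0 ∧
      ∃ j' : Fin n, j' < j ∧ A ⟨n - 1, Nat.sub_lt j.pos Nat.one_pos⟩ j' = 1)).card

/-- `ρL(A)`, the number of `0`'s above the `1` in the left-most column of `A`. -/
def rhoL {n : ℕ} (A : Fin n → Fin n → ℤ) : ℕ :=
  (univ.filter (fun i : Fin n =>
    A i ⟨0, i.pos⟩ = 0 ∧ ∃ i' : Fin n, i < i' ∧ A i' ⟨0, i.pos⟩ = 1)).card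

open Classical in
/-- The quadruply-refined ASM generating function
`Zqua_n(x,y;z1,z2,z3,z4) = Σ_A x^{ν(A)} y^{μ(A)} z1^{ρT(A)} z2^{ρR(A)} z3^{ρB(A)} z4^{ρL(A)}`. -/
noncomputable def Zqua (n : ℕ) {R : Type*} [CommRing R] (x y z1 z2 z3 z4 : R) : R :=
  ∑ e : Fin n → Fin n → Fin 3,
    if IsASM (asmMat e) then
      x ^ nuASM (asmMat e) * y ^ muASM (asmMat e) * z1 ^ rhoT (asmMat e) *
        z2 ^ rhoR (asmMat e) * z3 ^ rhoB (asmMat e) * z4 ^ rhoL (asmMat e)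
    else 0

/-- Adjacent-boundary doubly-refined generating function `Zadj_n(x,y;z1,z2)`. -/
noncomputable def Zadj (n : ℕ) {R : Type*} [CommRing R] (x y z1 z2 : R) : R :=
  Zqua n x y z1 1 1 z2

/-- Alternative adjacent-boundary doubly-refined generating function `Zbaradj_n(x,y;z1,z2)`. -/
noncomputable def Zbaradj (n : ℕ) {R : Type*} [CommRing R] (x y z1 z2 : R) : R :=
  Zqua n x y z1 z2 1 1

/-- Triply-refined generating function `Ztri_n(x,y;z1,z2,z3)`. -/
noncomputable def Ztri (n : ℕ) {R : Type*} [CommRing R] (x y z1 z2 z3 : R) : R :=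
  Zqua n x y z1 1 z2 z3

/-- Opposite-boundary doubly-refined generating function `Zopp_n(x,y;z1,z2)`. -/
noncomputable def Zopp (n : ℕ) {R : Type*} [CommRing R] (x y z1 z2 : R) : R :=
  Zqua n x y z1 1 z2 1

/-- Singly-refined generating function `Z_n(x,y;z)`. -/
noncomputable def Zsing (n : ℕ) {R : Type*} [CommRing R] (x y z : R) : R :=
  Zqua n x y z 1 1 1

/-- Unrefined generating function `Z_n(x,y)`.  Note `Zun 0 x y = 1`. -/
noncomputable def Zun (n : ℕ) {R : Type*} [CommRing R] (x y : R) : R :=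
  Zqua n x y 1 1 1 1

/-- The six local weights of a vertex of the six-vertex model.  The first digit of a name is the
horizontal incoming edge and the second one the vertical incoming edge; `one` and `neg` are the
weights of the vertices which correspond to the entries `1` and `-1`. -/
structure Vertex (R : Type*) where
  w00 : R
  w11 : R
  w01 : R
  w10 : R
  one : R
  neg : R

/-- The action of one row of vertices on functions of the vertical edge states, with horizontal
edge `h` on the left and horizontal edge `true` on the right. -/
def rowOp {R γ : Type*} [CommRing R] (w : γ → Vertex R) :
    List γ → Bool → (List Bool → R) → List Bool → R
  | [], true, f, [] => f []
  | [], false, _, [] => 0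
  | [], _, _, _ :: _ => 0
  | _ :: _, _, _, [] => 0
  | v :: vs, false, f, false :: s =>
      (w v).w00 * rowOp w vs false (fun t => f (false :: t)) s +
        (w v).one * rowOp w vs true (fun t => f (true :: t)) s
  | v :: vs, false, f, true :: s => (w v).w01 * rowOp w vs false (fun t => f (true :: t)) s
  | v :: vs, true, f, false :: s => (w v).w10 * rowOp w vs true (fun t => f (false :: t)) s
  | v :: vs, true, f, true :: s =>
      (w v).w11 * rowOp w vs true (fun t => f (true :: t)) s +
        (w v).neg * rowOp w vs false (fun t => f (false :: t)) s

/-- The partition function with upper vertical edges `s`, lower vertical edges all `true`, left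
horizontal edges all `false` and right horizontal edges all `true`. -/
def partitionFn {R ρ γ : Type*} [CommRing R] (w : ρ → γ → Vertex R) :
    List ρ → List γ → List Bool → R
  | [], vs, s => if s = List.replicate vs.length true then 1 else 0
  | u :: us, vs, s => rowOp (w u) vs false (partitionFn w us vs) s

section General

variable {R ρ γ : Type*} [CommRing R]

theorem rowOp_add (w : γ → Vertex R) (vs : List γ) (h : Bool) (f g : List Bool → R)
    (s : List Bool) :
    rowOp w vs h (fun t => f t + g t) s = rowOp w vs h f s + rowOp w vs h g s := by
  induction vs generalizing h f g s with
  | nil => cases h <;> cases s <;> simp [rowOp]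
  | cons v vs ih =>
    rcases s with _ | ⟨b, s⟩
    · simp [rowOp]
    · cases h <;> cases b <;> simp only [rowOp, ih] <;> ring

theorem rowOp_mul_left (w : γ → Vertex R) (vs : List γ) (h : Bool) (c : R) (f : List Bool → R)
    (s : List Bool) :
    rowOp w vs h (fun t => c * f t) s = c * rowOp w vs h f s := by
  induction vs generalizing h f s with
  | nil => cases h <;> cases s <;> simp [rowOp]
  | cons v vs ih =>
    rcases s with _ | ⟨b, s⟩
    · simp [rowOp]
    · cases h <;> cases b <;> simp only [rowOp, ih] <;> ring

theorem rowOp_zero (w : γ → Vertex R) (vs : List γ) (h : Bool) (s : List Bool) :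
    rowOp w vs h (fun _ => 0) s = 0 := by
  simpa using rowOp_mul_left w vs h 0 (fun _ => 0) s

/-- The image of a vertex under a ring homomorphism. -/
def Vertex.map {S : Type*} [CommRing S] (φ : R →+* S) (v : Vertex R) : Vertex S :=
  ⟨φ v.w00, φ v.w11, φ v.w01, φ v.w10, φ v.one, φ v.neg⟩

theorem map_rowOp {S γ' : Type*} [CommRing S] (φ : R →+* S) (κ : γ → γ') (w : γ → Vertex R)
    (w' : γ' → Vertex S) (vs : List γ) (hw : ∀ v ∈ vs, w' (κ v) = (w v).map φ) (h : Bool)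
    (f : List Bool → R) (s : List Bool) :
    φ (rowOp w vs h f s) = rowOp w' (vs.map κ) h (fun t => φ (f t)) s := by
  induction vs generalizing h f s with
  | nil => cases h <;> cases s <;> simp [rowOp]
  | cons v vs ih =>
    have hv := hw v (by simp)
    have ih := ih fun v' hv' => hw v' (by simp [hv'])
    rcases s with _ | ⟨b, s⟩
    · simp [rowOp]
    · cases h <;> cases b <;>
        simp only [rowOp, List.map_cons, map_add, map_mul, ih, hv, Vertex.map]

theorem map_partitionFn {S ρ' γ' : Type*} [CommRing S] (φ : R →+* S) (κ : γ → γ') (σ : ρ → ρ')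
    (w : ρ → γ → Vertex R) (w' : ρ' → γ' → Vertex S) (us : List ρ) (vs : List γ)
    (hw : ∀ u ∈ us, ∀ v ∈ vs, w' (σ u) (κ v) = (w u v).map φ) (s : List Bool) :
    φ (partitionFn w us vs s) = partitionFn w' (us.map σ) (vs.map κ) s := by
  induction us generalizing s with
  | nil => simp only [partitionFn, List.map_nil, List.length_map]; split_ifs <;> simp
  | cons u us ih =>
    have ih := ih fun u' hu' => hw u' (by simp [hu'])
    simp only [partitionFn, List.map_cons]
    rw [map_rowOp φ κ (w u) (w' (σ u)) vs (hw u (by simp))]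
    simp only [ih]

theorem rowOp_true_replicate_false (w : γ → Vertex R) (vs : List γ) (f : List Bool → R) :
    rowOp w vs true f (List.replicate vs.length false) =
      (vs.map fun v => (w v).w10).prod * f (List.replicate vs.length false) := by
  induction vs generalizing f with
  | nil => simp [rowOp]
  | cons v vs ih => simp [rowOp, List.replicate_succ, ih, mul_assoc]

theorem partitionFn_true_cons (w : ρ → γ → Vertex R) (us : List ρ) (v : γ) (vs : List γ)
    (s : List Bool) :
    partitionFn w us (v :: vs) (true :: s) =
      (us.map fun u => (w u v).w01).prod * partitionFn w us vs s := by
  induction us generalizing s with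
  | nil => simp [partitionFn, List.replicate_succ]
  | cons u us ih => simp only [partitionFn, rowOp, ih, rowOp_mul_left, List.map_cons,
      List.prod_cons, mul_assoc]

/-- A vanishing weight in the upper left corner reduces the partition function. -/
theorem partitionFn_of_w00_eq_zero (w : ρ → γ → Vertex R) (u : ρ) (us : List ρ) (v : γ)
    (vs : List γ) (h : (w u v).w00 = 0) :
    partitionFn w (u :: us) (v :: vs) (List.replicate (vs.length + 1) false) =
      (w u v).one * (vs.map fun v' => (w u v').w10).prod *
        (us.map fun u' => (w u' v).w01).prod *
          partitionFn w us vs (List.replicate vs.length false) := by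
  simp only [partitionFn, List.replicate_succ, rowOp, h, partitionFn_true_cons, rowOp_mul_left,
    rowOp_true_replicate_false]
  ring

theorem rowOp_true_ite_replicate_true (w : γ → Vertex R) (vs : List γ) (s : List Bool) :
    rowOp w vs true (fun t => if t = List.replicate vs.length true then 1 else 0) s =
      (vs.map fun v => (w v).w11).prod *
        if s = List.replicate vs.length true then 1 else 0 := by
  induction vs generalizing s with
  | nil => cases s <;> simp [rowOp]
  | cons v vs ih =>
    rcases s with _ | ⟨b, s⟩
    · simp [rowOp, List.replicate_succ]
    · cases b
      · simp [rowOp, List.replicate_succ, rowOp_zero]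
      · simp [rowOp, List.replicate_succ, rowOp_zero, ih]

/-- A vanishing weight in the lower left corner reduces the partition function. -/
theorem partitionFn_of_w01_eq_zero (w : ρ → γ → Vertex R) (u : ρ) (us : List ρ) (v : γ)
    (vs : List γ) (s : List Bool) (h : (w u v).w01 = 0) :
    partitionFn w (us ++ [u]) (v :: vs) (false :: s) =
      (w u v).one * (vs.map fun v' => (w u v').w11).prod *
        (us.map fun u' => (w u' v).w00).prod * partitionFn w us vs s := by
  induction us generalizing s with
  | nil =>
    simp [partitionFn, rowOp, List.replicate_succ, rowOp_zero, rowOp_true_ite_replicate_true]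
  | cons u' us ih =>
    simp only [List.cons_append, partitionFn, rowOp, ih, partitionFn_true_cons, List.map_append,
      List.map_cons, List.map_nil, List.prod_append, List.prod_cons, h, rowOp_mul_left]
    simp
    ring

end General

/-- The weights of the six-vertex model with row parameter `u` and column parameter `v`. -/
def sixVertex {R : Type*} [CommRing R] (q u v : R) : Vertex R where
  w00 := q * (u - v)
  w11 := q * (u - v)
  w01 := q ^ 2 * u - v
  w10 := q ^ 2 * u - v
  one := (q ^ 2 - 1) * u
  neg := (q ^ 2 - 1) * v

section YangBaxter

variable {R : Type*} [CommRing R]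

/-- The Yang–Baxter equation for two rows. -/
theorem rowOp_rowOp_swap (q u₁ u₂ : R) (vs : List R) (f : List Bool → R) (s : List Bool) :
    (∀ h, (q ^ 2 * u₁ - u₂) *
        rowOp (sixVertex q u₂) vs h (rowOp (sixVertex q u₁) vs h f) s =
      (q ^ 2 * u₁ - u₂) * rowOp (sixVertex q u₁) vs h (rowOp (sixVertex q u₂) vs h f) s) ∧
    (q ^ 2 * u₁ - u₂) * rowOp (sixVertex q u₂) vs false (rowOp (sixVertex q u₁) vs true f) s =
      (q ^ 2 - 1) * u₂ * rowOp (sixVertex q u₁) vs false (rowOp (sixVertex q u₂) vs true f) s +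
      q * (u₁ - u₂) * rowOp (sixVertex q u₁) vs true (rowOp (sixVertex q u₂) vs false f) s ∧
    (q ^ 2 * u₁ - u₂) * rowOp (sixVertex q u₂) vs true (rowOp (sixVertex q u₁) vs false f) s =
      q * (u₁ - u₂) * rowOp (sixVertex q u₁) vs false (rowOp (sixVertex q u₂) vs true f) s +
      (q ^ 2 - 1) * u₁ * rowOp (sixVertex q u₁) vs true (rowOp (sixVertex q u₂) vs false f) s := by
  induction vs generalizing f s with
  | nil =>
    cases s
    · refine ⟨fun h => ?_, ?_, ?_⟩
      · cases h <;> simp [rowOp]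
      all_goals simp [rowOp]
    · simp [rowOp]
  | cons v vs ih =>
    rcases s with _ | ⟨b, s⟩
    · simp [rowOp]
    obtain ⟨Ef, Ff, Gf⟩ := ih (fun t => f (false :: t)) s
    obtain ⟨Et, Ft, Gt⟩ := ih (fun t => f (true :: t)) s
    cases b
    · refine ⟨fun h => ?_, ?_, ?_⟩
      · cases h
        · simp only [rowOp, rowOp_add, rowOp_mul_left, sixVertex]
          linear_combination q * (u₂ - v) * q * (u₁ - v) * Ef false +
            q * (u₂ - v) * ((q ^ 2 - 1) * u₁) * Ft + ((q ^ 2 - 1) * u₂) * (q ^ 2 * u₁ - v) * Gt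
        · simp only [rowOp, rowOp_mul_left, sixVertex]
          linear_combination (q ^ 2 * u₂ - v) * (q ^ 2 * u₁ - v) * Ef true
      · simp only [rowOp, rowOp_add, rowOp_mul_left, sixVertex]
        linear_combination q * (u₂ - v) * (q ^ 2 * u₁ - v) * Ff +
          ((q ^ 2 - 1) * u₂) * q * (u₁ - v) * Et true + ((q ^ 2 - 1) * u₂) * ((q ^ 2 - 1) * v) * Gf
      · simp only [rowOp, rowOp_add, rowOp_mul_left, sixVertex]
        linear_combination (q ^ 2 * u₂ - v) * q * (u₁ - v) * Gf +
          (q ^ 2 * u₂ - v) * ((q ^ 2 - 1) * u₁) * Et true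
    · refine ⟨fun h => ?_, ?_, ?_⟩
      · cases h
        · simp only [rowOp, rowOp_mul_left, sixVertex]
          linear_combination (q ^ 2 * u₂ - v) * (q ^ 2 * u₁ - v) * Et false
        · simp only [rowOp, rowOp_add, rowOp_mul_left, sixVertex]
          linear_combination q * (u₂ - v) * q * (u₁ - v) * Et true +
            q * (u₂ - v) * ((q ^ 2 - 1) * v) * Gf + ((q ^ 2 - 1) * v) * (q ^ 2 * u₁ - v) * Ff
      · simp only [rowOp, rowOp_add, rowOp_mul_left, sixVertex]
        linear_combination (q ^ 2 * u₂ - v) * q * (u₁ - v) * Ft +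
          (q ^ 2 * u₂ - v) * ((q ^ 2 - 1) * v) * Ef false
      · simp only [rowOp, rowOp_add, rowOp_mul_left, sixVertex]
        linear_combination q * (u₂ - v) * (q ^ 2 * u₁ - v) * Gt + ((q ^ 2 - 1) * v) * q * (u₁ -
          v) * Ef false + ((q ^ 2 - 1) * v) * ((q ^ 2 - 1) * u₁) * Ft

end YangBaxter

section Interpolation

variable {R : Type*} [CommRing R]

/-- The six-vertex partition function with domain wall boundary conditions, row parameters `us`
and column parameters `vs`. -/
def domainWall (q : R) (us vs : List R) : R :=
  partitionFn (sixVertex q) us vs (List.replicate vs.length false)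

/-- The parameters in `us` and their multiples by `q ^ 2` are pairwise distinct. -/
def Generic (q : R) (us : List R) : Prop :=
  (us ++ us.map fun u => q ^ 2 * u).Nodup

theorem Generic.perm {q : R} {us us' : List R} (h : Generic q us) (p : us.Perm us') :
    Generic q us' :=
  (p.append (p.map _)).nodup_iff.mp h

theorem Generic.sublist {q : R} {us us' : List R} (h : Generic q us) (p : us'.Sublist us) :
    Generic q us' :=
  List.Nodup.sublist (p.append (p.map _)) h

theorem Generic.ne {q : R} {us : List R} (h : Generic q us) {u u' : R} (hu : u ∈ us)
    (hu' : u' ∈ us) : q ^ 2 * u ≠ u' := fun e =>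
  (List.disjoint_of_nodup_append h) hu' (e ▸ List.mem_map_of_mem hu)

theorem partitionFn_perm [IsDomain R] {q : R} {us us' : List R} (p : us.Perm us')
    (h : Generic q us) (vs : List R) (s : List Bool) :
    partitionFn (sixVertex q) us vs s = partitionFn (sixVertex q) us' vs s := by
  induction p generalizing s with
  | nil => rfl
  | cons x p ih =>
    simp only [partitionFn]
    congr 1
    exact funext (ih (h.sublist (List.sublist_cons_self _ _)))
  | swap x y l =>
    simp only [partitionFn]
    exact mul_left_cancel₀ (sub_ne_zero.mpr (h.ne (by simp) (by simp)))
      ((rowOp_rowOp_swap q x y vs _ s).1 false)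
  | trans p₁ p₂ ih₁ ih₂ => rw [ih₁ h, ih₂ (h.perm p₁)]

theorem domainWall_perm [IsDomain R] {q : R} {us us' : List R} (h : Generic q us)
    (p : us.Perm us') (vs : List R) : domainWall q us vs = domainWall q us' vs :=
  partitionFn_perm p h vs _

/-- At the parameters `u` and `q ^ 2 * u` of the first column the partition function reduces to
one of smaller size. -/
theorem exists_domainWall_eq [IsDomain R] (q u v : R) (hq : q ≠ 0) (vs : List R)
    (hv : v = u ∨ v = q ^ 2 * u) :
    ∃ (c d : R) (g : R → R), d ≠ 0 ∧ (∀ k, (q ^ 2 * k - v) * (k - v) = d * (k - u) * g k) ∧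
      ∀ us, Generic q (u :: us) →
        domainWall q (u :: us) (v :: vs) = c * (us.map g).prod * domainWall q us vs := by
  rcases hv with rfl | rfl
  · refine ⟨(q ^ 2 - 1) * v * (vs.map fun b => q ^ 2 * v - b).prod, 1, fun k => q ^ 2 * k - v,
      one_ne_zero, fun k => by ring, fun us _ => ?_⟩
    exact partitionFn_of_w00_eq_zero (sixVertex q) v us v vs (by simp [sixVertex])
  · refine ⟨(q ^ 2 - 1) * u * (vs.map fun b => q * (u - b)).prod, q,
      fun k => q * (k - q ^ 2 * u), hq, fun k => by ring, fun us h => ?_⟩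
    rw [domainWall_perm h (List.perm_append_singleton u us).symm]
    exact partitionFn_of_w01_eq_zero (sixVertex q) u us (q ^ 2 * u) vs _ (by simp [sixVertex])

open Polynomial in
theorem degree_rowOp_lt {γ : Type*} (w : γ → Vertex R[X]) (w' : γ → Vertex R) (vs : List γ)
    (hw : ∀ v ∈ vs, w v = (w' v).map C) (h : Bool) (f : List Bool → R[X]) (s : List Bool)
    (d : WithBot ℕ) (hd : ⊥ < d) (hf : ∀ t, (f t).degree < d) : (rowOp w vs h f s).degree < d := by
  have hC : ∀ (c : R) (p : R[X]), p.degree < d → (C c * p).degree < d := fun c p hp =>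
    (smul_eq_C_mul (p := p) c ▸ degree_smul_le c p).trans_lt hp
  induction vs generalizing h f s with
  | nil => cases h <;> cases s <;> simp [rowOp, hf, hd]
  | cons v vs ih =>
    have ih := ih fun v' hv' => hw v' (by simp [hv'])
    rcases s with _ | ⟨b, s⟩
    · simp [rowOp, hd]
    · cases h <;> cases b <;> simp only [rowOp, hw v (by simp), Vertex.map]
      · exact (degree_add_le _ _).trans_lt (max_lt (hC _ _ (ih _ _ _ fun t => hf _))
          (hC _ _ (ih _ _ _ fun t => hf _)))
      · exact hC _ _ (ih _ _ _ fun t => hf _)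
      · exact hC _ _ (ih _ _ _ fun t => hf _)
      · exact (degree_add_le _ _).trans_lt (max_lt (hC _ _ (ih _ _ _ fun t => hf _))
          (hC _ _ (ih _ _ _ fun t => hf _)))

open Polynomial in
theorem exists_polynomial_partitionFn (q : R) (us vs : List R) (s : List Bool) :
    (∃ p : R[X], p.degree < us.length ∧
      ∀ t, p.eval t = partitionFn (sixVertex q) us (t :: vs) (false :: s)) ∧
    ∃ p : R[X], p.degree < us.length + 1 ∧
      ∀ t, p.eval t = partitionFn (sixVertex q) us (t :: vs) (true :: s) := by
  have hlin : ∀ (n : ℕ) (a b : R) (p : R[X]), p.degree < n →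
      ((C a - C b * X) * p).degree < (n : WithBot ℕ) + 1 := by
    intro n a b p hp
    have hp := (degree_lt_iff_coeff_zero _ _).1 hp
    refine (degree_lt_iff_coeff_zero _ (n + 1)).2 fun m hm => ?_
    obtain ⟨m, rfl⟩ : ∃ k, m = k + 1 := ⟨m - 1, by omega⟩
    rw [sub_mul, mul_assoc, coeff_sub, coeff_C_mul, coeff_C_mul, coeff_X_mul, hp _ (by omega),
      hp _ (by omega)]
    simp
  induction us generalizing s with
  | nil =>
    refine ⟨⟨0, by simp, by simp [partitionFn, List.replicate_succ]⟩,
      ⟨C (if s = List.replicate vs.length true then 1 else 0), ?_, ?_⟩⟩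
    · exact degree_C_le.trans_lt (by simp)
    · simp only [partitionFn, eval_C]
      simp [List.replicate_succ]
  | cons u us ih =>
    choose p₀ d₀ e₀ using fun s => (ih s).1
    choose p₁ d₁ e₁ using fun s => (ih s).2
    have ev : ∀ (h : Bool) (p : List Bool → R[X]) (t : R),
        (rowOp (fun v => (sixVertex q u v).map C) vs h p s).eval t =
          rowOp (sixVertex q u) vs h (fun s => (p s).eval t) s := by
      intro h p t
      have := map_rowOp (evalRingHom t) id (fun v => (sixVertex q u v).map C) (sixVertex q u) vs
        (by simp [Vertex.map, sixVertex]) h p s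
      simpa using this
    have dg : ∀ (h : Bool) (p : List Bool → R[X]) (n : ℕ), (∀ s, (p s).degree < n) →
        (rowOp (fun v => (sixVertex q u v).map C) vs h p s).degree < n := fun h p n hp =>
      degree_rowOp_lt _ _ vs (fun _ _ => rfl) h p s n (WithBot.bot_lt_coe n) hp
    refine ⟨⟨(C (q * u) - C q * X) * rowOp (fun v => (sixVertex q u v).map C) vs false p₀ s +
      C ((q ^ 2 - 1) * u) * rowOp (fun v => (sixVertex q u v).map C) vs true p₁ s, ?_, ?_⟩,
      ⟨(C (q ^ 2 * u) - C 1 * X) * rowOp (fun v => (sixVertex q u v).map C) vs false p₁ s,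
      ?_, ?_⟩⟩
    · refine (degree_add_le _ _).trans_lt (max_lt ?_ ?_)
      · exact_mod_cast hlin us.length _ _ _ (dg _ _ _ d₀)
      · rw [← smul_eq_C_mul]
        exact (degree_smul_le _ _).trans_lt
          (by exact_mod_cast dg _ _ (us.length + 1) (by exact_mod_cast d₁))
    · intro t
      simp only [eval_add, eval_mul, eval_sub, eval_C, eval_X, ev, e₀, e₁, partitionFn, rowOp]
      simp only [sixVertex]
      ring
    · exact_mod_cast hlin (us.length + 1) _ _ _ (dg _ _ (us.length + 1) (by exact_mod_cast d₁))
    · intro t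
      simp only [eval_mul, eval_sub, eval_C, eval_X, ev, e₁, partitionFn, rowOp]
      simp only [sixVertex]
      ring

open Polynomial in
theorem exists_polynomial_domainWall (q : R) (us vs : List R) (n : ℕ) (h : us.length = n + 1) :
    ∃ p : R[X], p.natDegree ≤ n ∧ ∀ t, p.eval t = domainWall q us (t :: vs) := by
  obtain ⟨p, hp, e⟩ :=
    (exists_polynomial_partitionFn q us vs (List.replicate vs.length false)).1
  refine ⟨p, ?_, e⟩
  rw [h] at hp
  exact natDegree_le_iff_coeff_eq_zero.2 fun N hN => (degree_lt_iff_coeff_zero _ _).1 hp N hN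

end Interpolation

section Pluecker

open Polynomial

variable {R : Type*} [CommRing R]

/-- The left-hand side of the three-term relation between partition functions of sizes
`us.length + 2` and `us.length + 1`. -/
def threeTerm (q r s w t : R) (us vs : List R) : R :=
  (r - s) * ((q ^ 2 * w - t) * (w - t)) *
      (domainWall q (r :: s :: us) (t :: vs) * domainWall q (w :: us) vs) +
    (s - w) * ((q ^ 2 * r - t) * (r - t)) *
      (domainWall q (s :: w :: us) (t :: vs) * domainWall q (r :: us) vs) +
    (w - r) * ((q ^ 2 * s - t) * (s - t)) *
      (domainWall q (w :: r :: us) (t :: vs) * domainWall q (s :: us) vs)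

/-- The left-hand side of the Plücker relation between partition functions of size
`us.length + 2`. -/
def fourTerm (q r s w p : R) (us vs : List R) : R :=
  (r - s) * (w - p) * (domainWall q (r :: s :: us) vs * domainWall q (w :: p :: us) vs) +
    (s - w) * (r - p) * (domainWall q (s :: w :: us) vs * domainWall q (r :: p :: us) vs) +
    (w - r) * (s - p) * (domainWall q (w :: r :: us) vs * domainWall q (s :: p :: us) vs)

/-- A polynomial of small degree vanishes identically if it vanishes at all the parameters in `us`
and at their multiples by `q ^ 2`. -/
theorem eval_eq_zero_of_generic [IsDomain R] {q : R} {us : List R} (h : Generic q us) (p : R[X])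
    (hp : p.natDegree < 2 * us.length)
    (H : ∀ u ∈ us, ∀ v, v = u ∨ v = q ^ 2 * u → p.eval v = 0) (t : R) : p.eval t = 0 := by
  classical
  rw [eq_zero_of_natDegree_lt_card_of_eval_eq_zero' p (us ++ us.map fun u => q ^ 2 * u).toFinset
    ?_ ?_, eval_zero]
  · intro v hv
    rw [List.mem_toFinset, List.mem_append, List.mem_map] at hv
    rcases hv with hv | ⟨u, hu, rfl⟩
    · exact H v hv v (Or.inl rfl)
    · exact H u hu _ (Or.inr rfl)
  · rw [List.toFinset_card_of_nodup h]
    simpa [two_mul] using hp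

theorem threeTerm_rotate [IsDomain R] {q r s w : R} {us : List R} (t : R) (vs : List R) :
    threeTerm q s w r t us vs = threeTerm q r s w t us vs := by
  simp only [threeTerm]
  ring

theorem threeTerm_node [IsDomain R] {q r s w t : R} {us : List R} (hq : q ≠ 0)
    (h : Generic q (r :: s :: w :: us)) (ht : t = r ∨ t = q ^ 2 * r) (vs : List R) :
    threeTerm q r s w t us vs = 0 := by
  obtain ⟨c, d, g, -, hg, hZ⟩ := exists_domainWall_eq q r t hq vs ht
  have h₁ : Generic q (r :: s :: us) := h.sublist (by simp)
  have h₂ : Generic q (r :: w :: us) := h.sublist (by simp)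
  simp only [threeTerm, hg, hZ _ h₁, domainWall_perm (h₂.perm (List.Perm.swap _ _ _))
    (List.Perm.swap _ _ _), hZ _ h₂, List.map_cons, List.prod_cons]
  ring

theorem threeTerm_eq_zero_of_fourTerm [IsDomain R] {q r s w : R} {us : List R} (hq : q ≠ 0)
    (h : Generic q (r :: s :: w :: us)) (t : R) (vs : List R)
    (H : ∀ x us', us.Perm (x :: us') → fourTerm q r s w x us' vs = 0) :
    threeTerm q r s w t us vs = 0 := by
  classical
  have hperm : ∀ {l l' : List R}, (∀ a, l.count a = l'.count a) → l.Perm l' :=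
    List.perm_iff_count.2
  obtain ⟨p₁, d₁, e₁⟩ := exists_polynomial_domainWall q (r :: s :: us) vs (us.length + 1) rfl
  obtain ⟨p₂, d₂, e₂⟩ := exists_polynomial_domainWall q (s :: w :: us) vs (us.length + 1) rfl
  obtain ⟨p₃, d₃, e₃⟩ := exists_polynomial_domainWall q (w :: r :: us) vs (us.length + 1) rfl
  have key : ∀ t, (C (r - s) * ((C (q ^ 2 * w) - X) * (C w - X)) *
      (p₁ * C (domainWall q (w :: us) vs)) +
    C (s - w) * ((C (q ^ 2 * r) - X) * (C r - X)) * (p₂ * C (domainWall q (r :: us) vs)) +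
    C (w - r) * ((C (q ^ 2 * s) - X) * (C s - X)) *
      (p₃ * C (domainWall q (s :: us) vs))).eval t = threeTerm q r s w t us vs := by
    intro t
    simp only [threeTerm, eval_add, eval_mul, eval_sub, eval_C, eval_X, e₁, e₂, e₃]
  rw [← key]
  have hdeg : ∀ (a b c d : R) (p : R[X]), p.natDegree ≤ us.length + 1 →
      (C a * ((C b - X) * (C c - X)) * (p * C d)).natDegree ≤ us.length + 3 := by
    intro a b c d p hp
    have h1 : ∀ e : R, (C e - X).natDegree ≤ 1 := fun e => by compute_degree
    have h2 := natDegree_mul_le_of_le (natDegree_mul_le_of_le (natDegree_C a).le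
      (natDegree_mul_le_of_le (h1 b) (h1 c))) (natDegree_mul_le_of_le hp (natDegree_C d).le)
    omega
  refine eval_eq_zero_of_generic h _ (Nat.lt_of_le_of_lt (natDegree_add_le_of_degree_le
    (natDegree_add_le_of_degree_le (hdeg _ _ _ _ _ d₁) (hdeg _ _ _ _ _ d₂))
    (hdeg _ _ _ _ _ d₃)) (by simp only [List.length_cons]; omega)) ?_ t
  intro u hu v hv
  rw [key]
  simp only [List.mem_cons] at hu
  rcases hu with rfl | rfl | rfl | hu
  · exact threeTerm_node hq h hv vs
  · rw [← threeTerm_rotate]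
    exact threeTerm_node hq (h.perm (hperm fun a => by simp only [List.count_cons]; ring)) hv vs
  · rw [← threeTerm_rotate, ← threeTerm_rotate]
    exact threeTerm_node hq (h.perm (hperm fun a => by simp only [List.count_cons]; ring)) hv vs
  · obtain ⟨us', hus⟩ : ∃ us', us.Perm (u :: us') := by
      obtain ⟨a, b, rfl⟩ := List.append_of_mem hu
      exact ⟨_, List.perm_middle⟩
    have hp := H u us' hus
    obtain ⟨c, d, g, -, hg, hZ⟩ := exists_domainWall_eq q u v hq vs hv
    have hG : Generic q (u :: r :: s :: w :: us') := h.perm (hperm fun a => by simp only [List.count_cons, hus.count_eq]; ring)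
    have hZ' : ∀ x y,
        Generic q (u :: x :: y :: us') → domainWall q (x :: y :: us) (v :: vs) =
          c * (g x * (g y * (us'.map g).prod)) * domainWall q (x :: y :: us') vs := by
      intro x y hxy
      rw [← domainWall_perm hxy (hperm fun a => by simp only [List.count_cons, hus.count_eq]; ring), hZ _ hxy]
      simp
    have hw : ∀ x, Generic q (u :: x :: us') →
        domainWall q (x :: us) vs = domainWall q (x :: u :: us') vs := by
      intro x hx
      rw [← domainWall_perm hx (hperm fun a => by simp only [List.count_cons, hus.count_eq]; ring), domainWall_perm hx (List.Perm.swap _ _ _)]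
    rw [threeTerm, hw w (hG.sublist (by simp)), hw r (hG.sublist (by simp)),
      hw s (hG.sublist (by simp)), hZ' r s (hG.sublist (by simp)),
      hZ' s w (hG.sublist (by simp)),
      hZ' w r ((hG.perm (hperm (fun a => by simp only [List.count_cons]; ring) :
        List.Perm _ (u :: w :: r :: s :: us'))).sublist
        (by simp)), hg, hg, hg]
    rw [fourTerm] at hp
    linear_combination c * d * g r * g s * g w * (us'.map g).prod * hp

theorem fourTerm_node [IsDomain R] {q r s w p t : R} {us : List R} (hq : q ≠ 0)
    (h : Generic q (r :: s :: w :: p :: us)) (ht : t = r ∨ t = q ^ 2 * r) (vs : List R)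
    (H : threeTerm q s w p t us vs = 0) : fourTerm q r s w p us (t :: vs) = 0 := by
  classical
  have hperm : ∀ {l l' : List R}, (∀ a, l.count a = l'.count a) → l.Perm l' :=
    List.perm_iff_count.2
  obtain ⟨c, d, g, hd, hg, hZ⟩ := exists_domainWall_eq q r t hq vs ht
  have h₁ : Generic q (r :: s :: us) := h.sublist (by simp)
  have h₂ : Generic q (r :: w :: us) := h.sublist (by simp)
  have h₃ : Generic q (r :: p :: us) := h.sublist (by simp)
  have h₄ : Generic q (s :: p :: us) := h.sublist (List.Sublist.cons _ (by simp))
  refine (mul_eq_zero.1 ?_).resolve_left hd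
  rw [threeTerm, hg, hg, hg, domainWall_perm (h₄.perm (List.Perm.swap _ _ _))
    (List.Perm.swap _ _ _)] at H
  simp only [fourTerm, hZ _ h₁, domainWall_perm (h₂.perm (List.Perm.swap _ _ _))
    (List.Perm.swap _ _ _), hZ _ h₂, hZ _ h₃, List.map_cons, List.prod_cons]
  linear_combination -(c * (us.map g).prod) * H

theorem fourTerm_rotate {q r s w p : R} {us : List R} (vs : List R) :
    fourTerm q s w r p us vs = fourTerm q r s w p us vs := by
  simp only [fourTerm]
  ring

theorem fourTerm_swap [IsDomain R] {q r s w p : R} {us : List R}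
    (h : Generic q (r :: s :: w :: p :: us)) (vs : List R) :
    fourTerm q p s w r us vs = -fourTerm q r s w p us vs := by
  have h₁ : Generic q (s :: p :: us) := h.sublist (List.Sublist.cons _ (by simp))
  have h₂ : Generic q (r :: p :: us) := h.sublist (by simp)
  have h₃ : Generic q (r :: s :: us) := h.sublist (by simp)
  simp only [fourTerm, domainWall_perm h₁ (List.Perm.swap _ _ _),
    domainWall_perm h₂ (List.Perm.swap _ _ _), domainWall_perm h₃ (List.Perm.swap _ _ _)]
  ring

theorem fourTerm_eq_zero_of_threeTerm [IsDomain R] {q r s w p : R} {us : List R} (hq : q ≠ 0)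
    (h : Generic q (r :: s :: w :: p :: us)) (t : R) (vs : List R)
    (H₃ : ∀ a b c d t, (a :: b :: c :: d :: us).Perm (r :: s :: w :: p :: us) →
      threeTerm q b c d t us vs = 0)
    (H₄ : ∀ x us', us.Perm (x :: us') → fourTerm q r s w p us' vs = 0) :
    fourTerm q r s w p us (t :: vs) = 0 := by
  classical
  have hperm : ∀ {l l' : List R}, (∀ a, l.count a = l'.count a) → l.Perm l' :=
    List.perm_iff_count.2
  have hP : ∀ a b, ∃ f : R[X], f.natDegree ≤ us.length + 1 ∧
      ∀ t, f.eval t = domainWall q (a :: b :: us) (t :: vs) := fun a b =>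
    exists_polynomial_domainWall q (a :: b :: us) vs (us.length + 1) rfl
  choose f hf ef using hP
  have key : ∀ t, (C ((r - s) * (w - p)) * (f r s * f w p) +
      C ((s - w) * (r - p)) * (f s w * f r p) +
      C ((w - r) * (s - p)) * (f w r * f s p)).eval t = fourTerm q r s w p us (t :: vs) := by
    intro t
    simp only [fourTerm, eval_add, eval_mul, eval_C, ef]
  rw [← key]
  have hdeg : ∀ (e : R) (a b c d : R),
      (C e * (f a b * f c d)).natDegree ≤ 2 * us.length + 2 := by
    intro e a b c d
    have := natDegree_mul_le_of_le (natDegree_C e).le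
      (natDegree_mul_le_of_le (hf a b) (hf c d))
    omega
  refine eval_eq_zero_of_generic h _ (Nat.lt_of_le_of_lt (natDegree_add_le_of_degree_le
    (natDegree_add_le_of_degree_le (hdeg _ _ _ _ _) (hdeg _ _ _ _ _))
    (hdeg _ _ _ _ _)) (by simp only [List.length_cons]; omega)) ?_ t
  intro u hu v hv
  rw [key]
  simp only [List.mem_cons] at hu
  rcases hu with rfl | rfl | rfl | rfl | hu
  · exact fourTerm_node hq h hv vs (H₃ _ _ _ _ _ (List.Perm.refl _))
  · have hp : (u :: w :: r :: p :: us).Perm (r :: u :: w :: p :: us) :=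
      hperm fun a => by simp only [List.count_cons]; ring
    rw [← fourTerm_rotate]
    exact fourTerm_node hq (h.perm hp.symm) hv vs (H₃ _ _ _ _ _ hp)
  · have hp : (u :: r :: s :: p :: us).Perm (r :: s :: u :: p :: us) :=
      hperm fun a => by simp only [List.count_cons]; ring
    rw [← fourTerm_rotate, ← fourTerm_rotate]
    exact fourTerm_node hq (h.perm hp.symm) hv vs (H₃ _ _ _ _ _ hp)
  · have hp : (u :: s :: w :: r :: us).Perm (r :: s :: w :: u :: us) :=
      hperm fun a => by simp only [List.count_cons]; ring
    rw [← neg_eq_zero, ← fourTerm_swap h]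
    exact fourTerm_node hq (h.perm hp.symm) hv vs (H₃ _ _ _ _ _ hp)
  · obtain ⟨us', hus⟩ : ∃ us', us.Perm (u :: us') := by
      obtain ⟨a, b, rfl⟩ := List.append_of_mem hu
      exact ⟨_, List.perm_middle⟩
    have hp := H₄ u us' hus
    obtain ⟨c, d, g, -, hg, hZ⟩ := exists_domainWall_eq q u v hq vs hv
    have hZ' : ∀ x y a b, (x :: y :: a :: b :: us).Perm (r :: s :: w :: p :: us) →
        domainWall q (x :: y :: us) (v :: vs) =
          c * (g x * (g y * (us'.map g).prod)) * domainWall q (x :: y :: us') vs := by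
      intro x y a b hxy
      have hG : Generic q (u :: x :: y :: us') :=
        (h.perm (hxy.symm.trans (hperm (fun a => by
          simp only [List.count_cons, hus.count_eq]; ring) :
            List.Perm _ (a :: b :: u :: x :: y :: us')))).sublist
          (List.Sublist.cons _ (List.Sublist.cons _ (List.Sublist.refl _)))
      rw [← domainWall_perm hG (hperm fun a => by
        simp only [List.count_cons, hus.count_eq]; ring), hZ _ hG]
      simp
    rw [fourTerm, hZ' r s w p (hperm fun a => by simp only [List.count_cons]),
      hZ' w p r s (hperm fun a => by simp only [List.count_cons]; ring),
      hZ' s w r p (hperm fun a => by simp only [List.count_cons]; ring),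
      hZ' r p s w (hperm fun a => by simp only [List.count_cons]; ring),
      hZ' w r s p (hperm fun a => by simp only [List.count_cons]; ring),
      hZ' s p r w (hperm fun a => by simp only [List.count_cons]; ring)]
    rw [fourTerm] at hp
    linear_combination c ^ 2 * g r * g s * g w * g p * (us'.map g).prod ^ 2 * hp

theorem threeTerm_and_fourTerm [IsDomain R] {q : R} (hq : q ≠ 0) (n : ℕ) :
    (∀ r s w t us vs, us.length = n → vs.length = n + 1 → Generic q (r :: s :: w :: us) →
      threeTerm q r s w t us vs = 0) ∧
    ∀ r s w p us vs, us.length = n → vs.length = n + 2 → Generic q (r :: s :: w :: p :: us) →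
      fourTerm q r s w p us vs = 0 := by
  induction n with
  | zero =>
    have h₃ : ∀ r s w t us vs, us.length = 0 → vs.length = 0 + 1 →
        Generic q (r :: s :: w :: us) → threeTerm q r s w t us vs = 0 := by
      intro r s w t us vs hu hv h
      refine threeTerm_eq_zero_of_fourTerm hq h t vs fun x us' hp => ?_
      simp [hp.length_eq] at hu
    refine ⟨h₃, fun r s w p us vs hu hv h => ?_⟩
    obtain ⟨t, vs, rfl⟩ := List.exists_cons_of_length_eq_add_one hv
    refine fourTerm_eq_zero_of_threeTerm hq h t vs (fun a b c d t hp => ?_) fun x us' hp => ?_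
    · exact h₃ _ _ _ _ _ _ hu (by simpa using hv)
        ((h.perm hp.symm).sublist (List.sublist_cons_self _ _))
    · simp [hp.length_eq] at hu
  | succ n ih =>
    have h₃ : ∀ r s w t us vs, us.length = n + 1 → vs.length = n + 1 + 1 →
        Generic q (r :: s :: w :: us) → threeTerm q r s w t us vs = 0 := by
      intro r s w t us vs hu hv h
      refine threeTerm_eq_zero_of_fourTerm hq h t vs fun x us' hp => ?_
      refine ih.2 _ _ _ _ _ _ (by simpa [hp.length_eq] using hu) hv ?_
      exact h.perm (((hp.cons w).cons s).cons r)
    refine ⟨h₃, fun r s w p us vs hu hv h => ?_⟩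
    obtain ⟨t, vs, rfl⟩ := List.exists_cons_of_length_eq_add_one hv
    refine fourTerm_eq_zero_of_threeTerm hq h t vs (fun a b c d t hp => ?_) fun x us' hp => ?_
    · exact h₃ _ _ _ _ _ _ hu (by simpa using hv)
        ((h.perm hp.symm).sublist (List.sublist_cons_self _ _))
    · refine ih.2 _ _ _ _ _ _ (by simpa [hp.length_eq] using hu) (by simpa using hv) ?_
      refine (h.perm ((((hp.cons p).cons w).cons s).cons r)).sublist ?_
      simp

end Pluecker

section Specialization

open MvPolynomial

theorem generic_X (l : List ℕ) (h : l.Nodup) :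
    Generic (X none : MvPolynomial (Option (ℕ ⊕ ℕ)) ℤ) (l.map fun i => X (some (Sum.inl i))) := by
  refine List.Nodup.append ?_ ?_ ?_
  · exact h.map fun i j e => by simpa using X_injective e
  · rw [List.map_map]
    refine h.map fun i j e => ?_
    have e := mul_left_cancel₀ (pow_ne_zero 2 (X_ne_zero none)) e
    simpa using X_injective e
  · intro p hp hp'
    simp only [List.mem_map, exists_exists_and_eq_and] at hp hp'
    obtain ⟨i, -, rfl⟩ := hp
    obtain ⟨j, -, e⟩ := hp'
    have := congrArg (eval fun o => if o = none then 0 else 1) e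
    simp at this

theorem map_domainWall {R S : Type*} [CommRing R] [CommRing S] (φ : R →+* S) (q : R)
    (us vs : List R) :
    φ (domainWall q us vs) = domainWall (φ q) (us.map φ) (vs.map φ) := by
  rw [domainWall, map_partitionFn φ φ φ (sixVertex q) (sixVertex (φ q))]
  · simp [domainWall]
  · intro u _ v _
    simp [sixVertex, Vertex.map]

/-- The three-term relation, for arbitrary parameters. -/
theorem domainWall_three_term {S : Type*} [CommRing S] (q r s w t v : S) (m : ℕ) :
    (r - s) * ((q ^ 2 * w - t) * (w - t)) *
        (domainWall q (r :: (List.replicate m w ++ [s])) (t :: List.replicate (m + 1) v) *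
          domainWall q (w :: List.replicate m w) (List.replicate (m + 1) v)) +
      (s - w) * ((q ^ 2 * r - t) * (r - t)) *
        (domainWall q (w :: (List.replicate m w ++ [s])) (t :: List.replicate (m + 1) v) *
          domainWall q (r :: List.replicate m w) (List.replicate (m + 1) v)) +
      (w - r) * ((q ^ 2 * s - t) * (s - t)) *
        (domainWall q (r :: (List.replicate m w ++ [w])) (t :: List.replicate (m + 1) v) *
          domainWall q (s :: List.replicate m w) (List.replicate (m + 1) v)) = 0 := by
  let x : ℕ → MvPolynomial (Option (ℕ ⊕ ℕ)) ℤ := fun i => X (some (Sum.inl i))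
  let y : ℕ → MvPolynomial (Option (ℕ ⊕ ℕ)) ℤ := fun i => X (some (Sum.inr i))
  let A := (List.range m).map fun i => x (i + 3)
  let B := (List.range (m + 1)).map fun i => y (i + 1)
  have hG : Generic (X none) (x 0 :: x 1 :: x 2 :: A) := by
    have := generic_X (List.range (m + 3)) List.nodup_range
    simpa [List.range_succ_eq_map, A, x, Function.comp_def] using this
  have H := (threeTerm_and_fourTerm (X_ne_zero none) m).1 (x 0) (x 1) (x 2) (y 0) A B
    (by simp [A]) (by simp [B]) hG
  have h₁ : Generic (X none) (x 0 :: x 1 :: A) := hG.sublist (by simp)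
  have h₂ : Generic (X none) (x 1 :: x 2 :: A) := hG.sublist (by simp)
  have h₃ : Generic (X none) (x 0 :: x 2 :: A) := hG.sublist (by simp)
  rw [threeTerm, domainWall_perm h₁ ((List.perm_append_singleton _ _).symm.cons _),
    domainWall_perm h₂ ((List.perm_append_singleton _ (x 2 :: A)).symm),
    domainWall_perm (h₃.perm (List.Perm.swap _ _ _))
      ((List.perm_append_singleton _ (x 0 :: A)).symm)] at H
  let a : ℕ → S := fun i => if i = 0 then r else if i = 1 then s else w
  let b : ℕ → S := fun i => if i = 0 then t else v
  let φ : MvPolynomial (Option (ℕ ⊕ ℕ)) ℤ →+* S := eval₂Hom (Int.castRingHom S)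
    fun o => o.elim q (Sum.elim a b)
  have hA : A.map φ = List.replicate m w := by
    simp [A, x, φ, a, Function.comp_def]
  have hB : B.map φ = List.replicate (m + 1) v := by
    simp [B, y, φ, b, Function.comp_def]
  have hr : φ (x 0) = r := by simp [x, φ, a]
  have hs : φ (x 1) = s := by simp [x, φ, a]
  have hw : φ (x 2) = w := by simp [x, φ, a]
  have ht : φ (y 0) = t := by simp [y, φ, b]
  have hq : φ (X none) = q := by simp [φ]
  have H := congrArg φ H
  simp only [map_add, map_mul, map_sub, map_pow, map_zero, map_domainWall, List.map_cons,
    List.map_append, List.map_nil, hA, hB, hr, hs, hw, ht, hq] at H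
  exact H

end Specialization

section StateSum

variable {R ρ γ : Type*} [CommRing R]

/-- The weight of the vertex with horizontal incoming edge `h`, vertical incoming edge `s` and
entry `e - 1`; it vanishes if these data are inconsistent. -/
def Vertex.weight (W : Vertex R) (h s : ℤ) (e : Fin 3) : R :=
  if e = 1 then
    if h = 0 ∧ s = 0 then W.w00 else if h = 1 ∧ s = 1 then W.w11
    else if h = 0 ∧ s = 1 then W.w01 else if h = 1 ∧ s = 0 then W.w10 else 0
  else if e = 2 then if h = 0 ∧ s = 0 then W.one else 0
  else if h = 1 ∧ s = 1 then W.neg else 0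

/-- The sum over all rows of entries which defines the action of a row of vertices. -/
def rowSum {n : ℕ} (w : γ → Vertex R) (k : Fin n → γ) (h : ℤ) (s : Fin n → ℤ)
    (F : (Fin n → ℤ) → R) : R :=
  ∑ e : Fin n → Fin 3,
    (∏ j, (w (k j)).weight (h + ∑ j', if j' < j then ((e j' : ℕ) : ℤ) - 1 else 0) (s j) (e j)) *
      if h + ∑ j, (((e j : ℕ) : ℤ) - 1) = 1 then F fun j => s j + (((e j : ℕ) : ℤ) - 1) else 0

theorem rowSum_succ {n : ℕ} (w : γ → Vertex R) (k : Fin (n + 1) → γ) (h : ℤ)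
    (s : Fin (n + 1) → ℤ) (F : (Fin (n + 1) → ℤ) → R) :
    rowSum w k h s F = ∑ a : Fin 3, (w (k 0)).weight h (s 0) a *
      rowSum w (fun j => k j.succ) (h + (((a : ℕ) : ℤ) - 1)) (fun j => s j.succ)
        fun σ => F (Fin.cons (s 0 + (((a : ℕ) : ℤ) - 1)) σ) := by
  rw [rowSum, ← (Fin.consEquiv fun _ => Fin 3).sum_comp, Fintype.sum_prod_type]
  refine Finset.sum_congr rfl fun a _ => ?_
  rw [rowSum, Finset.mul_sum]
  refine Finset.sum_congr rfl fun e _ => ?_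
  have hc : (fun j => s j + ((((Fin.cons a e : Fin (n + 1) → Fin 3) j : ℕ) : ℤ) - 1)) =
      Fin.cons (s 0 + (((a : ℕ) : ℤ) - 1)) fun j => s j.succ + (((e j : ℕ) : ℤ) - 1) := by
    funext j
    refine Fin.cases ?_ (fun j => ?_) j <;> simp
  simp [-Finset.sum_sub_distrib, Fin.consEquiv, Fin.prod_univ_succ, Fin.sum_univ_succ, add_assoc,
    mul_assoc, hc]

theorem rowOp_eq_rowSum {n : ℕ} (w : γ → Vertex R) (k : Fin n → γ) (h : Bool) (s : Fin n → Bool)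
    (f : List Bool → R) (F : (Fin n → ℤ) → R)
    (hF : ∀ σ : Fin n → Bool, F (fun j => (σ j).toInt) = f (List.ofFn σ)) :
    rowOp w (List.ofFn k) h f (List.ofFn s) = rowSum w k h.toInt (fun j => (s j).toInt) F := by
  induction n generalizing h f with
  | zero =>
    have h0 := hF s
    rw [Subsingleton.elim (fun j => (s j).toInt) fun j => (s j).toInt + (0 - 1)] at h0
    cases h
    · simp [rowOp, rowSum]
    · simp only [List.ofFn_zero] at h0
      simp only [List.ofFn_zero, rowOp, ← h0, rowSum]
      simp
      congr 1
      exact Subsingleton.elim _ _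
  | succ n ih =>
    have key : ∀ (h b : Bool), rowOp w (List.ofFn fun j => k j.succ) h (fun t => f (b :: t))
        (List.ofFn fun j => s j.succ) = rowSum w (fun j => k j.succ) h.toInt
          (fun j => (s j.succ).toInt) fun σ => F (Fin.cons b.toInt σ) := by
      intro h b
      refine ih _ _ _ _ _ fun σ => ?_
      rw [← List.ofFn_cons, ← hF]
      congr 1
      funext j
      refine Fin.cases ?_ (fun j => ?_) j <;> simp
    rw [rowSum_succ, List.ofFn_succ, List.ofFn_succ (f := s)]
    cases h <;> cases s 0 <;>
      simp [rowOp, Fin.sum_univ_three, Vertex.weight, key, add_comm]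

/-- The sum over all matrices of entries which defines the partition function. -/
def latticeSum {m n : ℕ} (w : ρ → γ → Vertex R) (g : Fin m → ρ) (k : Fin n → γ)
    (s : Fin n → ℤ) : R :=
  ∑ e : Fin m → Fin n → Fin 3,
    (∏ i, ∏ j, (w (g i) (k j)).weight
      (∑ j', if j' < j then ((e i j' : ℕ) : ℤ) - 1 else 0)
      (s j + ∑ i', if i' < i then ((e i' j : ℕ) : ℤ) - 1 else 0) (e i j)) *
    if (∀ i, ∑ j, (((e i j : ℕ) : ℤ) - 1) = 1) ∧
      ∀ j, s j + ∑ i, (((e i j : ℕ) : ℤ) - 1) = 1 then 1 else 0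

theorem latticeSum_succ {m n : ℕ} (w : ρ → γ → Vertex R) (g : Fin (m + 1) → ρ) (k : Fin n → γ)
    (s : Fin n → ℤ) :
    latticeSum w g k s = rowSum (w (g 0)) k 0 s (latticeSum w (fun i => g i.succ) k) := by
  rw [latticeSum, ← (Fin.consEquiv fun _ => Fin n → Fin 3).sum_comp, Fintype.sum_prod_type,
    rowSum]
  refine Finset.sum_congr rfl fun a _ => ?_
  rw [latticeSum]
  split_ifs with ha
  · rw [Finset.mul_sum]
    refine Finset.sum_congr rfl fun e _ => ?_
    rw [zero_add] at ha
    simp [-Finset.sum_sub_distrib, Fin.consEquiv, Fin.prod_univ_succ, Fin.sum_univ_succ,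
      Fin.forall_fin_succ, add_assoc,
      ha]
  · rw [mul_zero]
    refine Finset.sum_eq_zero fun e _ => ?_
    rw [zero_add] at ha
    rw [if_neg, mul_zero]
    rintro ⟨h, -⟩
    exact ha (by simpa [Fin.consEquiv] using h 0)

theorem partitionFn_eq_latticeSum {m n : ℕ} (w : ρ → γ → Vertex R) (g : Fin m → ρ) (k : Fin n → γ)
    (s : Fin n → Bool) :
    partitionFn w (List.ofFn g) (List.ofFn k) (List.ofFn s) =
      latticeSum w g k fun j => (s j).toInt := by
  induction m generalizing s with
  | zero =>
    have : List.ofFn s = List.replicate n true ↔ ∀ j, (s j).toInt = 1 := by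
      rw [← List.ofFn_const, List.ofFn_inj, funext_iff]
      refine forall_congr' fun j => ?_
      cases s j <;> simp
    simp [partitionFn, latticeSum, this]
  | succ m ih =>
    rw [latticeSum_succ, List.ofFn_succ, partitionFn]
    exact rowOp_eq_rowSum _ _ false _ _ _ fun σ => (ih _ σ).symm

end StateSum

section AlternatingSign

/-- The sum of the entries which strictly precede the position `j`. -/
def prefixSum {n : ℕ} (a : Fin n → ℤ) (j : Fin n) : ℤ :=
  ∑ j', if j' < j then a j' else 0

theorem sum_filter_le_eq {n : ℕ} (a : Fin n → ℤ) (j : Fin n) :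
    ∑ j' ∈ univ.filter (fun j' => j' ≤ j), a j' = prefixSum a j + a j := by
  have : a j = ∑ j', if j' = j then a j' else 0 := by simp
  rw [prefixSum, Finset.sum_filter]
  conv_rhs => rw [this]
  rw [← Finset.sum_add_distrib]
  refine Finset.sum_congr rfl fun j' _ => ?_
  rcases lt_trichotomy j' j with h | rfl | h
  · simp [h, h.le, h.ne]
  · simp
  · simp [h.not_ge, h.not_gt, h.ne']

theorem prefixSum_eq_zero_or {n : ℕ} (a : Fin n → ℤ) (j : Fin n) :
    prefixSum a j = 0 ∨ ∃ i, prefixSum a j = prefixSum a i + a i := by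
  rcases j with ⟨_ | j, hj⟩
  · left
    exact Finset.sum_eq_zero fun i _ => if_neg (by simp [Fin.lt_def])
  · right
    refine ⟨⟨j, by omega⟩, ?_⟩
    rw [← sum_filter_le_eq, prefixSum, Finset.sum_filter]
    refine Finset.sum_congr rfl fun i _ => ?_
    simp only [Fin.lt_def, Fin.le_def, Nat.lt_succ_iff]

theorem IsASM.prefixSum_row {n : ℕ} {A : Fin n → Fin n → ℤ} (h : IsASM A) (i j : Fin n) :
    prefixSum (A i) j = 0 ∨ prefixSum (A i) j = 1 := by
  rcases prefixSum_eq_zero_or (A i) j with h0 | ⟨k, hk⟩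
  · exact Or.inl h0
  · rw [hk, ← sum_filter_le_eq]
    exact h.2.1 i k

theorem IsASM.prefixSum_col {n : ℕ} {A : Fin n → Fin n → ℤ} (h : IsASM A) (i j : Fin n) :
    prefixSum (fun i' => A i' j) i = 0 ∨ prefixSum (fun i' => A i' j) i = 1 := by
  rcases prefixSum_eq_zero_or (fun i' => A i' j) i with h0 | ⟨k, hk⟩
  · exact Or.inl h0
  · rw [hk, ← sum_filter_le_eq]
    exact h.2.2.1 k j

/-- The configuration of the six-vertex model at a vertex: the entry vanishes and the incoming
edges are arbitrary, or it equals `1` or `-1` and the incoming edges are determined. -/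
theorem IsASM.local_cases {n : ℕ} {A : Fin n → Fin n → ℤ} (h : IsASM A) (i j : Fin n) :
    (A i j = 0 ∧ (prefixSum (A i) j = 0 ∨ prefixSum (A i) j = 1) ∧
      (prefixSum (fun i' => A i' j) i = 0 ∨ prefixSum (fun i' => A i' j) i = 1)) ∨
    (A i j = 1 ∧ prefixSum (A i) j = 0 ∧ prefixSum (fun i' => A i' j) i = 0) ∨
    (A i j = -1 ∧ prefixSum (A i) j = 1 ∧ prefixSum (fun i' => A i' j) i = 1) := by
  have h₁ := h.prefixSum_row i j
  have h₂ := h.prefixSum_col i j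
  have h₃ := h.2.1 i j
  have h₄ := h.2.2.1 i j
  rw [sum_filter_le_eq] at h₃ h₄
  have h₅ := h.1 i j
  omega

theorem asmMat_eq_zero {n : ℕ} {e : Fin n → Fin n → Fin 3} {i j : Fin n} :
    asmMat e i j = 0 ↔ e i j = 1 := by
  rw [asmMat]
  omega

theorem asmMat_eq_one {n : ℕ} {e : Fin n → Fin n → Fin 3} {i j : Fin n} :
    asmMat e i j = 1 ↔ e i j = 2 := by
  rw [asmMat]
  omega

theorem asmMat_eq_neg_one {n : ℕ} {e : Fin n → Fin n → Fin 3} {i j : Fin n} :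
    asmMat e i j = -1 ↔ e i j = 0 := by
  rw [asmMat]
  omega

variable {R : Type*} [CommRing R]

/-- The product of the vertex weights of a matrix. -/
def asmWeight {n : ℕ} (w : Fin n → Fin n → Vertex R) (e : Fin n → Fin n → Fin 3) : R :=
  ∏ i, ∏ j, (w i j).weight (prefixSum (asmMat e i) j)
    (prefixSum (fun i' => asmMat e i' j) i) (e i j)

theorem isASM_of_asmWeight_ne_zero {n : ℕ} {w : Fin n → Fin n → Vertex R}
    {e : Fin n → Fin n → Fin 3} (h : asmWeight w e ≠ 0) (hr : ∀ i, ∑ j, asmMat e i j = 1)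
    (hc : ∀ j, ∑ i, asmMat e i j = 1) : IsASM (asmMat e) := by
  have key : ∀ i j, (prefixSum (asmMat e i) j + asmMat e i j = 0 ∨
      prefixSum (asmMat e i) j + asmMat e i j = 1) ∧
      (prefixSum (fun i' => asmMat e i' j) i + asmMat e i j = 0 ∨
      prefixSum (fun i' => asmMat e i' j) i + asmMat e i j = 1) := by
    intro i j
    by_contra hcon
    refine h (Finset.prod_eq_zero (Finset.mem_univ i) (Finset.prod_eq_zero (Finset.mem_univ j) ?_))
    simp only [Vertex.weight, ← asmMat_eq_zero, ← asmMat_eq_one]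
    split_ifs <;> first | rfl | (exfalso; omega) | skip
    have := asmMat_eq_neg_one (e := e) (i := i) (j := j)
    have := asmMat_eq_one (e := e) (i := i) (j := j)
    have := asmMat_eq_zero (e := e) (i := i) (j := j)
    omega
  refine ⟨fun i j => ?_, fun i j => ?_, fun i j => ?_, hr, hc⟩
  · have := asmMat_eq_neg_one (e := e) (i := i) (j := j)
    have := asmMat_eq_one (e := e) (i := i) (j := j)
    have := asmMat_eq_zero (e := e) (i := i) (j := j)
    omega
  · rw [sum_filter_le_eq]
    exact (key i j).1
  · rw [sum_filter_le_eq]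
    exact (key i j).2

open Classical in
/-- The partition function with domain wall boundary conditions is a sum over alternating sign
matrices. -/
theorem partitionFn_eq_sum_asm {ρ γ : Type*} {n : ℕ} (w : ρ → γ → Vertex R) (g : Fin n → ρ)
    (k : Fin n → γ) :
    partitionFn w (List.ofFn g) (List.ofFn k) (List.replicate n false) =
      ∑ e, if IsASM (asmMat e) then asmWeight (fun i j => w (g i) (k j)) e else 0 := by
  rw [← List.ofFn_const, partitionFn_eq_latticeSum, latticeSum]
  refine Finset.sum_congr rfl fun e _ => ?_
  simp only [Bool.toInt_false, zero_add]
  by_cases h : asmWeight (fun i j => w (g i) (k j)) e = 0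
  · rw [h, ite_self]
    exact mul_eq_zero_of_left h _
  · rw [mul_ite, mul_one, mul_zero]
    have hiff : IsASM (asmMat e) ↔ (∀ i, ∑ j, (((e i j : ℕ) : ℤ) - 1) = 1) ∧
        ∀ j, ∑ i, (((e i j : ℕ) : ℤ) - 1) = 1 :=
      ⟨fun H => H.2.2.2, fun H => isASM_of_asmWeight_ne_zero h H.1 H.2⟩
    rw [if_congr hiff.symm rfl rfl]
    rfl

end AlternatingSign

section Statistics

theorem sum_ite_le {n : ℕ} {a : Fin n → ℤ} (ha : ∑ j, a j = 1) (j : Fin n) :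
    (∑ j', if j ≤ j' then a j' else 0) = 1 - prefixSum a j := by
  rw [← ha, prefixSum, ← Finset.sum_sub_distrib]
  refine Finset.sum_congr rfl fun i _ => ?_
  by_cases h : j ≤ i
  · simp [h, h.not_gt]
  · simp [h, not_le.1 h]

theorem sum_ite_lt {n : ℕ} {a : Fin n → ℤ} (ha : ∑ j, a j = 1) (j : Fin n) :
    (∑ j', if j < j' then a j' else 0) = 1 - (prefixSum a j + a j) := by
  rw [← ha, ← sum_filter_le_eq, Finset.sum_filter, ← Finset.sum_sub_distrib]
  refine Finset.sum_congr rfl fun i _ => ?_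
  by_cases h : j < i
  · simp [h, h.not_ge]
  · simp [h, not_lt.1 h]

/-- The vertex at position `(i, j)` has a vanishing entry and both incoming edges are `0`. -/
def IsInversion {n : ℕ} (A : Fin n → Fin n → ℤ) (i j : Fin n) : Prop :=
  A i j = 0 ∧ prefixSum (A i) j = 0 ∧ prefixSum (fun i' => A i' j) i = 0

open Classical in
theorem IsASM.nuASM_eq {n : ℕ} {A : Fin n → Fin n → ℤ} (h : IsASM A) :
    nuASM A = ∑ i, ∑ j, if IsInversion A i j then 1 else 0 := by
  have key : (∑ i : Fin n, ∑ i' : Fin n, ∑ j : Fin n, ∑ j' : Fin n,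
      if i < i' ∧ j' ≤ j then A i j * A i' j' else 0) =
      ((∑ i, ∑ j, if IsInversion A i j then 1 else 0 : ℕ) : ℤ) := by
    push_cast
    refine Finset.sum_congr rfl fun i _ => ?_
    have : ∀ i' : Fin n, (∑ j : Fin n, ∑ j' : Fin n,
        if i < i' ∧ j' ≤ j then A i j * A i' j' else 0) =
        ∑ j' : Fin n, ∑ j : Fin n,
          (if j' ≤ j then A i j else 0) * (if i < i' then A i' j' else 0) := by
      intro i'
      rw [Finset.sum_comm]
      refine Finset.sum_congr rfl fun j' _ => Finset.sum_congr rfl fun j _ => ?_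
      by_cases h₁ : i < i' <;> by_cases h₂ : j' ≤ j <;> simp [h₁, h₂]
    rw [Finset.sum_congr rfl fun i' _ => this i', Finset.sum_comm]
    refine Finset.sum_congr rfl fun j _ => ?_
    have hj : ∀ i', (∑ j' : Fin n, (if j ≤ j' then A i j' else 0) *
        (if i < i' then A i' j else 0)) =
        (1 - prefixSum (A i) j) * (if i < i' then A i' j else 0) := fun i' => by
      rw [← Finset.sum_mul, sum_ite_le (h.2.2.2.1 i)]
    rw [Finset.sum_congr rfl fun i' _ => hj i', ← Finset.mul_sum,
      sum_ite_lt (a := fun i' => A i' j) (h.2.2.2.2 j)]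
    rw [IsInversion]
    rcases h.local_cases i j with ⟨h₁, h₂ | h₂, h₃ | h₃⟩ | ⟨h₁, h₂, h₃⟩ | ⟨h₁, h₂, h₃⟩ <;>
      simp [h₁, h₂, h₃]
  rw [nuASM, key, Int.toNat_natCast]

theorem exists_gt_eq_one_iff {n : ℕ} {a : Fin n → ℤ} (ha : ∑ j, a j = 1)
    (h0 : ∀ j, a j = 0 ∨ a j = 1) {j : Fin n} (hj : a j = 0) :
    (∃ j', j < j' ∧ a j' = 1) ↔ prefixSum a j = 0 := by
  have h1 := sum_ite_lt ha j
  rw [hj, add_zero] at h1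
  constructor
  · rintro ⟨i, hi, hai⟩
    have hle : (1 : ℤ) ≤ ∑ j', if j < j' then a j' else 0 := by
      rw [← hai]
      refine le_of_eq_of_le (if_pos hi).symm
        (Finset.single_le_sum (f := fun j' => if j < j' then a j' else 0) (fun k _ => ?_)
          (Finset.mem_univ i))
      have := h0 k
      split_ifs <;> omega
    have hge : 0 ≤ prefixSum a j := Finset.sum_nonneg fun k _ => by
      have := h0 k
      split_ifs <;> omega
    omega
  · intro h
    rw [h] at h1
    obtain ⟨i, -, hi⟩ := Finset.exists_ne_zero_of_sum_ne_zero (by rw [h1]; simp)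
    have := h0 i
    refine ⟨i, ?_, ?_⟩
    · by_contra hc
      exact hi (if_neg hc)
    · have : a i ≠ 0 := fun hc => hi (by simp [hc])
      omega

theorem exists_lt_eq_one_iff {n : ℕ} {a : Fin n → ℤ} (ha : ∑ j, a j = 1)
    (h0 : ∀ j, a j = 0 ∨ a j = 1) {j : Fin n} (hj : a j = 0) :
    (∃ j', j' < j ∧ a j' = 1) ↔ prefixSum a j = 1 := by
  have h1 := sum_ite_lt ha j
  rw [hj, add_zero] at h1
  constructor
  · rintro ⟨i, hi, hai⟩
    have hle : (1 : ℤ) ≤ prefixSum a j := by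
      rw [← hai]
      refine le_of_eq_of_le (if_pos hi).symm
        (Finset.single_le_sum (f := fun j' => if j' < j then a j' else 0) (fun k _ => ?_)
          (Finset.mem_univ i))
      have := h0 k
      split_ifs <;> omega
    have hge : 0 ≤ ∑ j', if j < j' then a j' else 0 := Finset.sum_nonneg fun k _ => by
      have := h0 k
      split_ifs <;> omega
    omega
  · intro h
    obtain ⟨i, -, hi⟩ := Finset.exists_ne_zero_of_sum_ne_zero
      (by rw [← prefixSum, h]; simp : (∑ j', if j' < j then a j' else 0) ≠ 0)
    have := h0 i
    refine ⟨i, ?_, ?_⟩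
    · by_contra hc
      exact hi (if_neg hc)
    · have : a i ≠ 0 := fun hc => hi (by simp [hc])
      omega

variable {N : ℕ} {A : Fin (N + 1) → Fin (N + 1) → ℤ}

theorem prefixSum_zero (a : Fin (N + 1) → ℤ) : prefixSum a 0 = 0 :=
  Finset.sum_eq_zero fun i _ => if_neg (by simp)

theorem prefixSum_last_add (a : Fin (N + 1) → ℤ) :
    prefixSum a (Fin.last N) + a (Fin.last N) = ∑ j, a j := by
  rw [← sum_filter_le_eq, Finset.filter_true_of_mem fun i _ => Fin.le_last i]

theorem IsASM.top_row (h : IsASM A) (j : Fin (N + 1)) : A 0 j = 0 ∨ A 0 j = 1 := by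
  have := h.2.2.1 0 j
  rwa [sum_filter_le_eq, prefixSum_zero, zero_add] at this

theorem IsASM.left_col (h : IsASM A) (i : Fin (N + 1)) : A i 0 = 0 ∨ A i 0 = 1 := by
  have := h.2.1 i 0
  rwa [sum_filter_le_eq, prefixSum_zero, zero_add] at this

theorem IsASM.prefixSum_bottom_row (h : IsASM A) (j : Fin (N + 1)) :
    prefixSum (fun i' => A i' j) (Fin.last N) + A (Fin.last N) j = 1 := by
  rw [prefixSum_last_add (fun i' => A i' j), h.2.2.2.2]

theorem IsASM.bottom_row (h : IsASM A) (j : Fin (N + 1)) :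
    A (Fin.last N) j = 0 ∨ A (Fin.last N) j = 1 := by
  have h₁ := h.prefixSum_bottom_row j
  have h₂ := h.prefixSum_col (Fin.last N) j
  omega

open Classical in
theorem IsASM.rhoT_eq (h : IsASM A) :
    rhoT A = (univ.filter fun j => IsInversion A 0 j).card := by
  refine congrArg Finset.card (Finset.filter_congr fun j _ => ?_)
  change A 0 j = 0 ∧ (∃ j', j < j' ∧ A 0 j' = 1) ↔ _
  rw [IsInversion, prefixSum_zero]
  simp only [and_true]
  exact and_congr_right fun hj => exists_gt_eq_one_iff (h.2.2.2.1 0) h.top_row hj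

open Classical in
theorem IsASM.rhoL_eq (h : IsASM A) :
    rhoL A = (univ.filter fun i => IsInversion A i 0).card := by
  refine congrArg Finset.card (Finset.filter_congr fun i _ => ?_)
  change A i 0 = 0 ∧ (∃ i', i < i' ∧ A i' 0 = 1) ↔ _
  rw [IsInversion, prefixSum_zero, eq_self, true_and]
  exact and_congr_right fun hj =>
    exists_gt_eq_one_iff (a := fun i => A i 0) (h.2.2.2.2 0) h.left_col hj

theorem IsASM.rhoB_eq (h : IsASM A) :
    rhoB A = (univ.filter fun j => A (Fin.last N) j = 0 ∧
      prefixSum (A (Fin.last N)) j = 1).card := by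
  refine congrArg Finset.card (Finset.filter_congr fun j _ => ?_)
  change A (Fin.last N) j = 0 ∧ (∃ j', j' < j ∧ A (Fin.last N) j' = 1) ↔ _
  exact and_congr_right fun hj => exists_lt_eq_one_iff (h.2.2.2.1 _) h.bottom_row hj

end Statistics

section Refined

variable {R : Type*} [CommRing R] {N : ℕ}

/-- The vertex weights which give the statistics of alternating sign matrices. The weights `c₁`
and `c₂` are attached to the empty upper left and lower left corners. -/
def refinedVertex (x y z₁ z₂ z₃ c₁ c₂ : R) (i j : Fin (N + 1)) : Vertex R where
  w00 := x * (if i = 0 then z₁ else 1) * (if j = 0 then z₃ else 1) *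
    (if i = 0 ∧ j = 0 then c₁ else 1)
  w11 := if i = Fin.last N then z₂ else 1
  w01 := if i = Fin.last N ∧ j = 0 then c₂ else 1
  w10 := 1
  one := 1
  neg := y

open Classical in
theorem asmWeight_refinedVertex (x y z₁ z₂ z₃ c₁ c₂ : R)
    {e : Fin (N + 1) → Fin (N + 1) → Fin 3} (h : IsASM (asmMat e)) :
    asmWeight (refinedVertex x y z₁ z₂ z₃ c₁ c₂) e =
      x ^ nuASM (asmMat e) * y ^ muASM (asmMat e) * z₁ ^ rhoT (asmMat e) *
        z₂ ^ rhoB (asmMat e) * z₃ ^ rhoL (asmMat e) *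
        (if asmMat e 0 0 = 0 then c₁ else 1) *
        (if asmMat e (Fin.last N) 0 = 0 then c₂ else 1) := by
  have hloc : ∀ i j, (refinedVertex x y z₁ z₂ z₃ c₁ c₂ i j).weight (prefixSum (asmMat e i) j)
      (prefixSum (fun i' => asmMat e i' j) i) (e i j) =
      (if IsInversion (asmMat e) i j then x else 1) * (if asmMat e i j = -1 then y else 1) *
      (if i = 0 then if IsInversion (asmMat e) i j then z₁ else 1 else 1) *
      (if i = Fin.last N then
        if asmMat e i j = 0 ∧ prefixSum (asmMat e i) j = 1 then z₂ else 1 else 1) *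
      (if j = 0 then if IsInversion (asmMat e) i j then z₃ else 1 else 1) *
      (if i = 0 then if j = 0 then if asmMat e i j = 0 then c₁ else 1 else 1 else 1) *
      (if i = Fin.last N then if j = 0 then if asmMat e i j = 0 then c₂ else 1 else 1 else 1) := by
    intro i j
    have h0 : i = 0 → prefixSum (fun i' => asmMat e i' j) i = 0 := by
      rintro rfl
      exact prefixSum_zero _
    have h0' : j = 0 → prefixSum (asmMat e i) j = 0 := by
      rintro rfl
      exact prefixSum_zero _
    have hl : i = Fin.last N → prefixSum (fun i' => asmMat e i' j) i + asmMat e i j = 1 := by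
      rintro rfl
      exact h.prefixSum_bottom_row j
    rw [IsInversion]
    rcases h.local_cases i j with ⟨h₁, h₂ | h₂, h₃ | h₃⟩ | ⟨h₁, h₂, h₃⟩ | ⟨h₁, h₂, h₃⟩ <;>
      [have he := asmMat_eq_zero.1 h₁; have he := asmMat_eq_zero.1 h₁;
        have he := asmMat_eq_zero.1 h₁; have he := asmMat_eq_zero.1 h₁;
        have he := asmMat_eq_one.1 h₁; have he := asmMat_eq_neg_one.1 h₁] <;>
      simp only [h₁, h₂, h₃] at h0 h0' hl <;>
      by_cases hi : i = 0 <;> by_cases hj : j = 0 <;> by_cases hi' : i = Fin.last N <;>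
      simp only [h₁, h₂, h₃, he, hi, hj, hi', Vertex.weight, refinedVertex] <;>
      simp_all
  simp only [asmWeight, hloc, Finset.prod_mul_distrib]
  have hpow : ∀ (P : Fin (N + 1) → Prop) [DecidablePred P] (a : R),
      (∏ j, if P j then a else 1) = a ^ (univ.filter P).card := fun P _ a => by
    rw [Finset.prod_ite, Finset.prod_const, Finset.prod_const_one, mul_one]
  have hx : (∏ i, ∏ j, if IsInversion (asmMat e) i j then x else 1) = x ^ nuASM (asmMat e) := by
    simp only [h.nuASM_eq, hpow, Finset.prod_pow_eq_pow_sum, Finset.card_filter]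
  have hy : (∏ i, ∏ j, if asmMat e i j = -1 then y else 1) = y ^ muASM (asmMat e) := by
    simp only [muASM, hpow, Finset.prod_pow_eq_pow_sum, Finset.card_filter]
    rw [Fintype.sum_prod_type]
  have hrow : ∀ (k : Fin (N + 1)) (f : Fin (N + 1) → Fin (N + 1) → R),
      (∏ i, ∏ j, if i = k then f i j else 1) = ∏ j, f k j := fun k f => by
    rw [Finset.prod_eq_single k (fun i _ hi => by simp [hi]) (by simp)]
    simp
  have hcol : ∀ (k : Fin (N + 1)) (f : Fin (N + 1) → Fin (N + 1) → R),
      (∏ i, ∏ j, if j = k then f i j else 1) = ∏ i, f i k := fun k f => by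
    rw [Finset.prod_comm, hrow k fun j i => f i j]
  rw [hx, hy, hrow 0, hrow (Fin.last N), hcol 0, hrow 0, hrow (Fin.last N)]
  simp only [hpow, h.rhoT_eq, h.rhoB_eq, h.rhoL_eq, Finset.prod_ite_eq', Finset.mem_univ, if_true]

end Refined

section Rotation

/-- The rotation of a matrix by a half-turn. -/
def halfTurn {n : ℕ} {α : Type*} (A : Fin n → Fin n → α) : Fin n → Fin n → α :=
  fun i j => A i.rev j.rev

theorem halfTurn_halfTurn {n : ℕ} {α : Type*} (A : Fin n → Fin n → α) :
    halfTurn (halfTurn A) = A := by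
  funext i j
  simp [halfTurn]

theorem asmMat_halfTurn {n : ℕ} (e : Fin n → Fin n → Fin 3) :
    asmMat (halfTurn e) = halfTurn (asmMat e) := rfl

theorem sum_filter_le_rev {n : ℕ} {a : Fin n → ℤ} (ha : ∑ j, a j = 1) (j : Fin n) :
    ∑ j' ∈ univ.filter (fun j' => j' ≤ j), a j'.rev = 1 - prefixSum a j.rev := by
  rw [← sum_ite_le ha, Finset.sum_filter, ← Equiv.sum_comp Fin.revPerm]
  simp [Fin.rev_le_iff]

theorem IsASM.halfTurn {n : ℕ} {A : Fin n → Fin n → ℤ} (h : IsASM A) : IsASM (halfTurn A) := by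
  refine ⟨fun i j => h.1 _ _, fun i j => ?_, fun i j => ?_, fun i => ?_, fun j => ?_⟩
  · have := h.prefixSum_row i.rev j.rev
    have := sum_filter_le_rev (h.2.2.2.1 i.rev) j
    simp only [_root_.halfTurn]
    omega
  · have := h.prefixSum_col i.rev j.rev
    have := sum_filter_le_rev (h.2.2.2.2 j.rev) i
    simp only [_root_.halfTurn]
    omega
  · rw [← h.2.2.2.1 i.rev]
    exact Equiv.sum_comp Fin.revPerm (A i.rev)
  · rw [← h.2.2.2.2 j.rev]
    exact Equiv.sum_comp Fin.revPerm fun i => A i j.rev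

theorem nuASM_halfTurn {n : ℕ} (A : Fin n → Fin n → ℤ) : nuASM (halfTurn A) = nuASM A := by
  rw [nuASM, nuASM]
  congr 1
  rw [Finset.sum_comm]
  rw [← Equiv.sum_comp Fin.revPerm]
  refine Finset.sum_congr rfl fun i _ => ?_
  rw [← Equiv.sum_comp Fin.revPerm]
  refine Finset.sum_congr rfl fun i' _ => ?_
  rw [Finset.sum_comm, ← Equiv.sum_comp Fin.revPerm]
  refine Finset.sum_congr rfl fun j _ => ?_
  rw [← Equiv.sum_comp Fin.revPerm]
  refine Finset.sum_congr rfl fun j' _ => ?_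
  simp [halfTurn, mul_comm]

theorem muASM_halfTurn {n : ℕ} (A : Fin n → Fin n → ℤ) : muASM (halfTurn A) = muASM A :=
  Finset.card_equiv (Fin.revPerm.prodCongr Fin.revPerm) fun p => by
    simp only [Finset.mem_filter, Finset.mem_univ, true_and]
    exact Iff.rfl

variable {N : ℕ} (A : Fin (N + 1) → Fin (N + 1) → ℤ)

theorem rhoT_halfTurn : rhoT (halfTurn A) = rhoB A := by
  refine Finset.card_equiv Fin.revPerm fun j => ?_
  simp only [Finset.mem_filter, Finset.mem_univ, true_and]
  change A (Fin.rev 0) j.rev = 0 ∧ (∃ j', j < j' ∧ A (Fin.rev 0) j'.rev = 1) ↔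
    A (Fin.last N) j.rev = 0 ∧ ∃ j', j' < j.rev ∧ A (Fin.last N) j' = 1
  rw [Fin.rev_zero, ← Fin.revPerm.surjective.exists (p := fun j' => j' < j.rev ∧
    A (Fin.last N) j' = 1) |>.symm]
  simp

theorem rhoL_halfTurn : rhoL (halfTurn A) = rhoR A := by
  refine Finset.card_equiv Fin.revPerm fun j => ?_
  simp only [Finset.mem_filter, Finset.mem_univ, true_and]
  change A j.rev (Fin.rev 0) = 0 ∧ (∃ j', j < j' ∧ A j'.rev (Fin.rev 0) = 1) ↔
    A j.rev (Fin.last N) = 0 ∧ ∃ j', j' < j.rev ∧ A j' (Fin.last N) = 1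
  rw [Fin.rev_zero, ← Fin.revPerm.surjective.exists (p := fun j' => j' < j.rev ∧
    A j' (Fin.last N) = 1) |>.symm]
  simp

theorem Zqua_halfTurn {R : Type*} [CommRing R] (x y z₁ z₂ z₃ z₄ : R) :
    Zqua (N + 1) x y z₁ z₂ z₃ z₄ = Zqua (N + 1) x y z₃ z₄ z₁ z₂ := by
  have hf : Function.Involutive
      (halfTurn : (Fin (N + 1) → Fin (N + 1) → Fin 3) → _) := halfTurn_halfTurn
  rw [Zqua, Zqua, ← Equiv.sum_comp hf.toPerm]
  refine Finset.sum_congr rfl fun e _ => ?_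
  have hB : rhoB (halfTurn (asmMat e)) = rhoT (asmMat e) := by
    rw [← rhoT_halfTurn, halfTurn_halfTurn]
  have hR : rhoR (halfTurn (asmMat e)) = rhoL (asmMat e) := by
    rw [← rhoL_halfTurn, halfTurn_halfTurn]
  have hA : IsASM (halfTurn (asmMat e)) ↔ IsASM (asmMat e) :=
    ⟨fun h => halfTurn_halfTurn (asmMat e) ▸ h.halfTurn, fun h => h.halfTurn⟩
  rw [Function.Involutive.coe_toPerm, asmMat_halfTurn, nuASM_halfTurn, muASM_halfTurn,
    rhoT_halfTurn, rhoL_halfTurn, hB, hR]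
  by_cases h : IsASM (asmMat e)
  · rw [if_pos h, if_pos (hA.2 h)]
    ring
  · rw [if_neg h, if_neg (mt hA.1 h)]

end Rotation

section RefinedSum

variable {R : Type*} [CommRing R] {N : ℕ}

/-- The partition function of the vertex weights `refinedVertex`. -/
def refinedSum (N : ℕ) (x y z₁ z₂ z₃ c₁ c₂ : R) : R :=
  partitionFn (refinedVertex x y z₁ z₂ z₃ c₁ c₂) (List.ofFn (id : Fin (N + 1) → _))
    (List.ofFn (id : Fin (N + 1) → _)) (List.replicate (N + 1) false)

theorem refinedSum_one_one (x y z₁ z₂ z₃ : R) :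
    refinedSum N x y z₁ z₂ z₃ 1 1 = Zqua (N + 1) x y z₁ 1 z₂ z₃ := by
  rw [refinedSum, partitionFn_eq_sum_asm, Zqua]
  refine Finset.sum_congr rfl fun e _ => ?_
  split_ifs with h
  · simp [asmWeight_refinedVertex x y z₁ z₂ z₃ 1 1 h]
  · rfl

theorem IsASM.corner_eq_zero {A : Fin (N + 2) → Fin (N + 2) → ℤ} (h : IsASM A)
    (h0 : A 0 0 ≠ 0) : A (Fin.last (N + 1)) 0 = 0 := by
  by_contra hl
  have hs := h.2.2.2.2 0
  have h1 := (h.left_col 0).resolve_left h0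
  have h2 := (h.left_col (Fin.last (N + 1))).resolve_left hl
  rw [Fin.sum_univ_succ, Fin.sum_univ_castSucc, Fin.succ_last, h1, h2] at hs
  have : 0 ≤ ∑ i : Fin N, A i.castSucc.succ 0 := Finset.sum_nonneg fun i _ => by
    have := h.left_col i.castSucc.succ
    omega
  omega

theorem refinedSum_expand (x y z₁ z₂ z₃ c₁ c₂ : R) :
    refinedSum (N + 1) x y z₁ z₂ z₃ c₁ c₂ =
      c₁ * c₂ * refinedSum (N + 1) x y z₁ z₂ z₃ 1 1 +
        (c₂ - c₁ * c₂) * refinedSum (N + 1) x y z₁ z₂ z₃ 0 1 +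
        (c₁ - c₁ * c₂) * refinedSum (N + 1) x y z₁ z₂ z₃ 1 0 := by
  simp only [refinedSum, partitionFn_eq_sum_asm, Finset.mul_sum, ← Finset.sum_add_distrib]
  refine Finset.sum_congr rfl fun e _ => ?_
  by_cases h : IsASM (asmMat e)
  · have H := fun c c' : R => asmWeight_refinedVertex x y z₁ z₂ z₃ c c' h
    simp only [id, if_pos h, H]
    by_cases h0 : asmMat e 0 0 = 0
    · simp only [if_pos h0]
      split_ifs <;> ring
    · simp only [if_neg h0, if_pos (h.corner_eq_zero h0)]
      ring
  · simp [h]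

theorem refinedSum_zero_one (x y z₁ z₂ z₃ : R) :
    refinedSum (N + 1) x y z₁ z₂ z₃ 0 1 = refinedSum N x y 1 z₂ 1 1 1 := by
  have hw : (fun i j : Fin (N + 1) => refinedVertex x y z₁ z₂ z₃ 0 1 i.succ j.succ) =
      refinedVertex x y 1 z₂ 1 1 1 := by
    funext i j
    simp [refinedVertex, Fin.succ_eq_last_succ]
  have h := partitionFn_of_w00_eq_zero (refinedVertex x y z₁ z₂ z₃ 0 1) (0 : Fin (N + 2))
    (List.ofFn Fin.succ) 0 (List.ofFn Fin.succ) (by simp [refinedVertex])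
  rw [List.length_ofFn, partitionFn_eq_sum_asm, hw] at h
  rw [refinedSum, List.ofFn_succ]
  refine h.trans ?_
  rw [refinedSum, partitionFn_eq_sum_asm]
  refine (congrArg₂ (· * ·) ?_ rfl).trans (one_mul _)
  simp [refinedVertex, List.map_ofFn, Function.comp_def]

theorem refinedSum_one_zero (x y z₁ z₂ z₃ : R) :
    refinedSum (N + 1) x y z₁ z₂ z₃ 1 0 =
      x ^ (N + 1) * z₁ * z₂ ^ (N + 1) * z₃ ^ (N + 1) * refinedSum N x y z₁ 1 1 1 1 := by
  have hw : (fun i j : Fin (N + 1) => refinedVertex x y z₁ z₂ z₃ 1 0 i.castSucc j.succ) =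
      refinedVertex x y z₁ 1 1 1 1 := by
    funext i j
    simp [refinedVertex, (Fin.castSucc_lt_last _).ne]
  have h := partitionFn_of_w01_eq_zero (refinedVertex x y z₁ z₂ z₃ 1 0) (Fin.last (N + 1))
    (List.ofFn Fin.castSucc) 0 (List.ofFn Fin.succ) (List.replicate (N + 1) false)
    (by simp [refinedVertex])
  rw [partitionFn_eq_sum_asm, hw] at h
  have e₁ : List.ofFn (id : Fin (N + 2) → _) = List.ofFn Fin.castSucc ++ [Fin.last (N + 1)] := by
    rw [List.ofFn_succ', List.concat_eq_append]
    rfl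
  have e₂ : List.ofFn (id : Fin (N + 2) → _) = 0 :: List.ofFn Fin.succ := List.ofFn_succ
  have h' : refinedSum (N + 1) x y z₁ z₂ z₃ 1 0 = _ :=
    (congrArg₂ (fun l l' => partitionFn (refinedVertex x y z₁ z₂ z₃ 1 0) l l'
      (List.replicate (N + 2) false)) e₁ e₂).trans h
  rw [h', refinedSum, partitionFn_eq_sum_asm]
  refine congrArg₂ (· * ·) ?_ rfl
  simp [refinedVertex, List.map_ofFn, Function.comp_def]
  ring

end RefinedSum

section Gauge

variable {K : Type*} [Field K]

theorem prod_zpow_eq_zpow_sum {ι : Type*} (s : Finset ι) (f : ι → ℤ) {a : K} (ha : a ≠ 0) :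
    ∏ i ∈ s, a ^ f i = a ^ ∑ i ∈ s, f i := by
  classical
  induction s using Finset.induction_on with
  | empty => simp
  | insert i s hi ih => rw [Finset.prod_insert hi, Finset.sum_insert hi, ih, zpow_add₀ ha]

/-- The number of pairs `i' < i` in `Fin n`. -/
def pairCount (n : ℕ) : ℤ :=
  ∑ i : Fin n, ∑ i' : Fin n, if i' < i then 1 else 0

theorem sum_prefixSum {n : ℕ} {A : Fin n → Fin n → ℤ} (h : ∀ i, ∑ j, A i j = 1) :
    ∑ i, ∑ j, prefixSum (fun i' => A i' j) i = pairCount n := by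
  refine Finset.sum_congr rfl fun i _ => ?_
  simp only [prefixSum]
  rw [Finset.sum_comm]
  refine Finset.sum_congr rfl fun i' _ => ?_
  split_ifs
  · exact h i'
  · simp

/-- The effect of a gauge transformation of the vertex weights on the weight of an alternating
sign matrix. -/
theorem IsASM.asmWeight_gauge {n : ℕ} {W W' : Fin n → Fin n → Vertex K} {l l' α α' : Fin n → K}
    {ζ : K} (hζ : ζ ≠ 0) (hα : ∀ i, α i ≠ 0) (hα' : ∀ j, α' j ≠ 0)
    {e : Fin n → Fin n → Fin 3} (h : IsASM (asmMat e))
    (hW : ∀ i j, (W' i j).weight (prefixSum (asmMat e i) j)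
        (prefixSum (fun i' => asmMat e i' j) i) (e i j) =
      l i * l' j * (α i ^ asmMat e i j * α' j ^ asmMat e i j) *
        (ζ ^ prefixSum (asmMat e i) j * ζ ^ prefixSum (fun i' => asmMat e i' j) i) *
        (W i j).weight (prefixSum (asmMat e i) j)
          (prefixSum (fun i' => asmMat e i' j) i) (e i j)) :
    asmWeight W' e = (∏ i, l i) ^ n * (∏ j, l' j) ^ n * ((∏ i, α i) * ∏ j, α' j) *
      (ζ ^ pairCount n * ζ ^ pairCount n) * asmWeight W e := by
  have h₁ : ∏ i, ∏ j, ζ ^ prefixSum (fun i' => asmMat e i' j) i = ζ ^ pairCount n := by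
    simp only [prod_zpow_eq_zpow_sum _ _ hζ, sum_prefixSum h.2.2.2.1]
  have h₂ : ∏ i, ∏ j, ζ ^ prefixSum (asmMat e i) j = ζ ^ pairCount n := by
    simp only [prod_zpow_eq_zpow_sum _ _ hζ]
    rw [Finset.sum_comm, sum_prefixSum (A := fun j i => asmMat e i j) h.2.2.2.2]
  have h₃ : ∏ i, ∏ j, α i ^ asmMat e i j = ∏ i, α i := by
    simp only [prod_zpow_eq_zpow_sum _ _ (hα _), h.2.2.2.1, zpow_one]
  have h₄ : ∏ i, ∏ j, α' j ^ asmMat e i j = ∏ j, α' j := by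
    rw [Finset.prod_comm]
    simp only [prod_zpow_eq_zpow_sum _ _ (hα' _), h.2.2.2.2, zpow_one]
  simp only [asmWeight, hW, Finset.prod_mul_distrib, h₁, h₂, h₃, h₄, Finset.prod_const,
    Finset.card_univ, Fintype.card_fin, Finset.prod_pow]

/-- The row parameters: `r` in the top row, `s` in the bottom row, and `w` in all other rows. -/
def rowParam {K : Type*} (N : ℕ) (r s w : K) (i : Fin (N + 1)) : K :=
  if i = 0 then r else if i = Fin.last N then s else w

/-- The column parameters: `t` in the left column and `1` in all other columns. -/
def colParam (N : ℕ) (t : K) (j : Fin (N + 1)) : K :=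
  if j = 0 then t else 1

theorem ofFn_rowParam_succ {K : Type*} (m : ℕ) (r s w : K) :
    List.ofFn (rowParam (m + 1) r s w) = r :: (List.replicate m w ++ [s]) := by
  rw [List.ofFn_succ, List.ofFn_succ', List.concat_eq_append, ← List.ofFn_const]
  simp [rowParam, Fin.ext_iff, (Fin.is_lt _).ne]

theorem ofFn_rowParam_self {K : Type*} (m : ℕ) (r w : K) :
    List.ofFn (rowParam m r w w) = r :: List.replicate m w := by
  rw [List.ofFn_succ, ← List.ofFn_const]
  simp [rowParam]

theorem ofFn_colParam (m : ℕ) (t : K) :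
    List.ofFn (colParam m t) = t :: List.replicate m 1 := by
  rw [List.ofFn_succ, ← List.ofFn_const]
  simp [colParam]

/-- The partition function of the vertex weights `refinedVertex` as a multiple of a partition
function of the six-vertex model. -/
theorem refinedSum_eq_domainWall {q w ξ r s t x y z₁ z₂ z₃ c₁ c₂ : K} (N : ℕ) (hξ : ξ ≠ 0)
    (hq : q ^ 2 - 1 ≠ 0) (hr0 : r ≠ 0) (hs0 : s ≠ 0) (hw0 : w ≠ 0)
    (ha : q ^ 2 * w - 1 ≠ 0) (har : q ^ 2 * r - 1 ≠ 0) (has : q ^ 2 * s - 1 ≠ 0)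
    (hat : q ^ 2 * w - t ≠ 0)
    (hw : q * (w - 1) = ξ * (q ^ 2 * w - 1)) (hr : q * (r - 1) = ξ * z₁ * (q ^ 2 * r - 1))
    (hs : q * (s - 1) = ξ * z₂ * (q ^ 2 * s - 1)) (ht : q * (w - t) = ξ * z₃ * (q ^ 2 * w - t))
    (hx : x = ξ ^ 2) (hy : y * (q ^ 2 * w - 1) ^ 2 = (q ^ 2 - 1) ^ 2 * w)
    (hc₁ : q * (r - t) * (q ^ 2 * w - 1) =
      ξ * z₁ * z₃ * c₁ * ((q ^ 2 * r - 1) * (q ^ 2 * w - t)))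
    (hc₂ : (q ^ 2 * w - 1) * (q ^ 2 * s - t) = c₂ * ((q ^ 2 * s - 1) * (q ^ 2 * w - t))) :
    refinedSum N x y z₁ z₂ z₃ c₁ c₂ =
      (∏ i, ξ / (q ^ 2 * rowParam N r s w i - 1)) ^ (N + 1) *
      (∏ j, (q ^ 2 * w - 1) / (q ^ 2 * w - colParam N t j)) ^ (N + 1) *
      ((∏ i, (q ^ 2 * rowParam N r s w i - 1) / (ξ * ((q ^ 2 - 1) * rowParam N r s w i))) *
        ∏ j, (q ^ 2 * w - colParam N t j) / (q ^ 2 * w - 1)) *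
      (ξ⁻¹ ^ pairCount (N + 1) * ξ⁻¹ ^ pairCount (N + 1)) *
      domainWall q (List.ofFn (rowParam N r s w)) (List.ofFn (colParam N t)) := by
  have hrow : ∀ i, rowParam N r s w i ≠ 0 ∧ q ^ 2 * rowParam N r s w i - 1 ≠ 0 := by
    intro i
    rw [rowParam]
    split_ifs <;> simp [*]
  have hcol : ∀ j, q ^ 2 * w - colParam N t j ≠ 0 := by
    intro j
    rw [colParam]
    split_ifs <;> simp [*]
  rw [refinedSum, domainWall, List.length_ofFn, partitionFn_eq_sum_asm, partitionFn_eq_sum_asm,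
    Finset.mul_sum]
  refine Finset.sum_congr rfl fun e _ => ?_
  split_ifs with h
  swap
  · rw [mul_zero]
  refine h.asmWeight_gauge (inv_ne_zero hξ)
    (fun i => div_ne_zero (hrow i).2 (mul_ne_zero hξ (mul_ne_zero hq (hrow i).1)))
    (fun j => div_ne_zero (hcol j) ha) fun i j => ?_
  have h0 : i = 0 → prefixSum (fun i' => asmMat e i' j) i = 0 := by
    rintro rfl
    exact prefixSum_zero _
  have h0' : j = 0 → prefixSum (asmMat e i) j = 0 := by
    rintro rfl
    exact prefixSum_zero _
  have hl : i = Fin.last N → prefixSum (fun i' => asmMat e i' j) i + asmMat e i j = 1 := by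
    rintro rfl
    exact h.prefixSum_bottom_row j
  obtain ⟨hu0, hu⟩ := hrow i
  have hv := hcol j
  rcases h.local_cases i j with ⟨h₁, h₂ | h₂, h₃ | h₃⟩ | ⟨h₁, h₂, h₃⟩ | ⟨h₁, h₂, h₃⟩
  · have he := asmMat_eq_zero.1 h₁
    have hi : i ≠ Fin.last N := fun hi => by simpa [h₁, h₃] using hl hi
    simp only [h₁, h₂, h₃, he, Vertex.weight, sixVertex, refinedVertex, id, hx]
    simp only [colParam, rowParam, if_neg hi] at hu hv hu0 ⊢
    by_cases hi0 : i = 0 <;> by_cases hj0 : j = 0 <;> simp [hi0, hj0] at hu hv hu0 ⊢ <;>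
      field_simp
    · linear_combination -hc₁
    · linear_combination -hr
    · linear_combination -ht
    · linear_combination -hw
  · have he := asmMat_eq_zero.1 h₁
    have hi : i ≠ 0 := fun hi => by simpa [h₃] using h0 hi
    simp only [h₁, h₂, h₃, he, Vertex.weight, sixVertex, refinedVertex, id]
    simp only [colParam, rowParam, if_neg hi] at hu hv hu0 ⊢
    by_cases hi0 : i = Fin.last N <;> by_cases hj0 : j = 0 <;> simp [hi0, hj0] at hu hv hu0 ⊢ <;>
      field_simp
    linear_combination -hc₂
  · have he := asmMat_eq_zero.1 h₁
    have hj : j ≠ 0 := fun hj => by simpa [h₂] using h0' hj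
    simp only [h₁, h₂, h₃, he, Vertex.weight, sixVertex, refinedVertex, id]
    simp [colParam, hj]
    field_simp
  · have he := asmMat_eq_zero.1 h₁
    have hj : j ≠ 0 := fun hj => by simpa [h₂] using h0' hj
    have hi : i ≠ 0 := fun hi => by simpa [h₃] using h0 hi
    simp only [h₁, h₂, h₃, he, Vertex.weight, sixVertex, refinedVertex, id]
    simp only [colParam, rowParam, if_neg hi, if_neg hj] at hu hv hu0 ⊢
    by_cases hi0 : i = Fin.last N <;> simp [hi0] at hu hu0 ⊢ <;> field_simp
    · linear_combination -hs
    · linear_combination -hw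
  · have he := asmMat_eq_one.1 h₁
    simp only [h₁, h₂, h₃, he, Vertex.weight, sixVertex, refinedVertex, id]
    simp
    field_simp
  · have he := asmMat_eq_neg_one.1 h₁
    have hj : j ≠ 0 := fun hj => by simpa [h₂] using h0' hj
    have hi : i ≠ 0 := fun hi => by simpa [h₃] using h0 hi
    have hi' : i ≠ Fin.last N := fun hi => by simpa [h₁, h₃] using hl hi
    simp only [h₁, h₂, h₃, he, Vertex.weight, sixVertex, refinedVertex, id]
    simp [colParam, rowParam, hi, hi', hj]
    field_simp
    linear_combination hy

end Gauge

section ThreeTerm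

variable {K : Type*} [Field K]

theorem prod_rowParam_succ (m : ℕ) (r s w : K) (F : K → K) :
    ∏ i, F (rowParam (m + 1) r s w i) = F r * F w ^ m * F s := by
  rw [← List.prod_ofFn, ← Function.comp_def, ← List.map_ofFn, ofFn_rowParam_succ]
  simp [mul_assoc]

theorem prod_rowParam_self (m : ℕ) (r w : K) (F : K → K) :
    ∏ i, F (rowParam m r w w i) = F r * F w ^ m := by
  rw [← List.prod_ofFn, ← Function.comp_def, ← List.map_ofFn, ofFn_rowParam_self]
  simp

/-- The three term relation for the partition functions of the vertex weights `refinedVertex`. -/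
theorem refinedSum_three_term {q w ξ r s t x y z₁ z₂ z₃ c₁ c₂ : K} (m : ℕ) (hξ : ξ ≠ 0)
    (hq : q ^ 2 - 1 ≠ 0) (hr0 : r ≠ 0) (hs0 : s ≠ 0) (hw0 : w ≠ 0)
    (ha : q ^ 2 * w - 1 ≠ 0) (har : q ^ 2 * r - 1 ≠ 0) (has : q ^ 2 * s - 1 ≠ 0)
    (hat : q ^ 2 * w - t ≠ 0)
    (hw : q * (w - 1) = ξ * (q ^ 2 * w - 1)) (hr : q * (r - 1) = ξ * z₁ * (q ^ 2 * r - 1))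
    (hs : q * (s - 1) = ξ * z₂ * (q ^ 2 * s - 1)) (ht : q * (w - t) = ξ * z₃ * (q ^ 2 * w - t))
    (hx : x = ξ ^ 2) (hy : y * (q ^ 2 * w - 1) ^ 2 = (q ^ 2 - 1) ^ 2 * w)
    (hc₁ : q * (r - t) * (q ^ 2 * w - 1) =
      ξ * z₁ * z₃ * c₁ * ((q ^ 2 * r - 1) * (q ^ 2 * w - t)))
    (hc₂ : (q ^ 2 * w - 1) * (q ^ 2 * s - t) = c₂ * ((q ^ 2 * s - 1) * (q ^ 2 * w - t))) :
    (r - s) * ((q ^ 2 * w - t) * (w - t)) * ((q ^ 2 * r - 1) * (q ^ 2 * s - 1)) *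
        (refinedSum (m + 1) x y z₁ z₂ z₃ c₁ c₂ * refinedSum m x y 1 1 1 1 1) +
      (s - w) * ((q ^ 2 * r - t) * (r - t)) * ((q ^ 2 * w - 1) * (q ^ 2 * s - 1)) *
        (refinedSum (m + 1) x y 1 z₂ z₃ 1 c₂ * refinedSum m x y z₁ 1 1 1 1) +
      (w - r) * ((q ^ 2 * s - t) * (s - t)) * ((q ^ 2 * w - 1) * (q ^ 2 * r - 1)) *
        (refinedSum (m + 1) x y z₁ 1 z₃ c₁ 1 * refinedSum m x y z₂ 1 1 1 1) = 0 := by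
  have h := domainWall_three_term q r s w t 1 m
  have hw' : q * (w - 1) = ξ * 1 * (q ^ 2 * w - 1) := by rw [hw, mul_one]
  rw [refinedSum_eq_domainWall (m + 1) hξ hq hr0 hs0 hw0 ha har has hat hw hr hs ht hx hy hc₁ hc₂,
    refinedSum_eq_domainWall (m + 1) (z₁ := 1) (c₁ := 1) hξ hq hw0 hs0 hw0 ha ha has hat hw hw' hs
      ht hx hy (by linear_combination (q ^ 2 * w - 1) * ht) hc₂,
    refinedSum_eq_domainWall (m + 1) (z₂ := 1) (c₂ := 1) hξ hq hr0 hw0 hw0 ha har ha hat hw hr hw'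
      ht hx hy hc₁ (by ring),
    refinedSum_eq_domainWall m (z₁ := 1) (z₂ := 1) (z₃ := 1) (c₁ := 1) (c₂ := 1) hξ hq hw0 hw0 hw0
      ha ha ha ha hw hw' hw' hw' hx hy (by linear_combination (q ^ 2 * w - 1) * hw) (by ring),
    refinedSum_eq_domainWall m (z₂ := 1) (z₃ := 1) (c₁ := 1) (c₂ := 1) hξ hq hr0 hw0 hw0
      ha har ha ha hw hr hw' hw' hx hy (by linear_combination (q ^ 2 * w - 1) * hr) (by ring),
    refinedSum_eq_domainWall m (z₁ := z₂) (z₂ := 1) (z₃ := 1) (c₁ := 1) (c₂ := 1) hξ hq hs0 hw0 hw0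
      ha has ha ha hw hs hw' hw' hx hy (by linear_combination (q ^ 2 * w - 1) * hs) (by ring)]
  simp only [prod_rowParam_succ _ _ _ _ fun u => ξ / (q ^ 2 * u - 1),
    prod_rowParam_succ _ _ _ _ fun u => (q ^ 2 * u - 1) / (ξ * ((q ^ 2 - 1) * u)),
    prod_rowParam_self _ _ _ fun u => ξ / (q ^ 2 * u - 1),
    prod_rowParam_self _ _ _ fun u => (q ^ 2 * u - 1) / (ξ * ((q ^ 2 - 1) * u)),
    ofFn_rowParam_succ, ofFn_rowParam_self, ofFn_colParam]
  simp only [← List.replicate_succ] at h ⊢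
  have er := mul_div_cancel₀ ξ har
  have es := mul_div_cancel₀ ξ has
  have ew := mul_div_cancel₀ ξ ha
  generalize domainWall q (r :: (List.replicate m w ++ [s])) _ = P₁ at *
  generalize domainWall q (w :: (List.replicate m w ++ [s])) _ = P₂ at *
  generalize domainWall q (r :: (List.replicate m w ++ [w])) _ = P₃ at *
  generalize domainWall q (List.replicate (m + 1) w) _ = Q₁ at *
  generalize domainWall q (r :: List.replicate m w) _ = Q₂ at *
  generalize domainWall q (s :: List.replicate m w) _ = Q₃ at *
  generalize ξ / (q ^ 2 * r - 1) = lr at *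
  generalize ξ / (q ^ 2 * s - 1) = ls at *
  generalize ξ / (q ^ 2 * w - 1) = lw at *
  generalize (q ^ 2 * r - 1) / (ξ * ((q ^ 2 - 1) * r)) = fr at *
  generalize (q ^ 2 * s - 1) / (ξ * ((q ^ 2 - 1) * s)) = fs at *
  generalize (q ^ 2 * w - 1) / (ξ * ((q ^ 2 - 1) * w)) = fw at *
  generalize ∏ j, (q ^ 2 * w - 1) / (q ^ 2 * w - colParam (m + 1) t j) = d at *
  generalize ∏ j, (q ^ 2 * w - colParam (m + 1) t j) / (q ^ 2 * w - 1) = d' at *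
  generalize ∏ j, (q ^ 2 * w - 1) / (q ^ 2 * w - colParam m 1 j) = k at *
  generalize ∏ j, (q ^ 2 * w - colParam m 1 j) / (q ^ 2 * w - 1) = k' at *
  generalize ξ⁻¹ ^ pairCount (m + 1 + 1) = p at *
  generalize ξ⁻¹ ^ pairCount (m + 1) = p' at *
  obtain ⟨M, hM⟩ : ∃ M, M = (lr * lw * ls) ^ (m + 1) * (lw ^ m) ^ (m + 2) * (lw ^ m) ^ (m + 1) *
    (d ^ (m + 2) * d' * k ^ (m + 1) * k') * (fr * fs * fw * fw ^ m * fw ^ m) *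
    (p * p * p' * p') := ⟨_, rfl⟩
  trans M * ((r - s) * ((q ^ 2 * w - t) * (w - t)) *
      ((q ^ 2 * r - 1) * lr * ((q ^ 2 * s - 1) * ls)) * (P₁ * Q₁) +
    (s - w) * ((q ^ 2 * r - t) * (r - t)) *
      ((q ^ 2 * w - 1) * lw * ((q ^ 2 * s - 1) * ls)) * (P₂ * Q₂) +
    (w - r) * ((q ^ 2 * s - t) * (s - t)) *
      ((q ^ 2 * w - 1) * lw * ((q ^ 2 * r - 1) * lr)) * (P₃ * Q₃))
  · rw [hM]
    simp only [mul_pow]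
    ring
  · rw [er, es, ew]
    linear_combination M * ξ ^ 2 * h

end ThreeTerm

section Parametrized

theorem refinedSum_expand' {R : Type*} [CommRing R] (m : ℕ) (x y z₁ z₂ z₃ c₁ c₂ : R) :
    refinedSum (m + 1) x y z₁ z₂ z₃ c₁ c₂ = c₁ * c₂ * Ztri (m + 2) x y z₁ z₂ z₃ +
      (c₂ - c₁ * c₂) * Zsing (m + 1) x y z₂ +
      (c₁ - c₁ * c₂) * (x ^ (m + 1) * z₁ * z₂ ^ (m + 1) * z₃ ^ (m + 1) *
        Zsing (m + 1) x y z₁) := by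
  rw [refinedSum_expand, refinedSum_zero_one, refinedSum_one_zero, refinedSum_one_one,
    refinedSum_one_one, refinedSum_one_one, Zqua_halfTurn x y 1 1 z₂ 1, Ztri, Zsing, Zsing]

/-- The identity for the triply-refined generating function, for values of the variables which are
given in terms of the parameters of the six-vertex model. -/
theorem Ztri_identity_of_param {K : Type*} [Field K] {q w ξ r s t x y z₁ z₂ z₃ : K} (m : ℕ)
    (hq0 : q ≠ 0) (hq : q ^ 2 - 1 ≠ 0) (hr0 : r ≠ 0) (hs0 : s ≠ 0) (hw0 : w ≠ 0)
    (ha : q ^ 2 * w - 1 ≠ 0) (har : q ^ 2 * r - 1 ≠ 0) (has : q ^ 2 * s - 1 ≠ 0)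
    (hat : q ^ 2 * w - t ≠ 0) (hr1 : r - 1 ≠ 0) (hw1 : w - 1 ≠ 0) (hwt : w - t ≠ 0)
    (hrt : r - t ≠ 0) (hst : q ^ 2 * s - t ≠ 0)
    (hw : q * (w - 1) = ξ * (q ^ 2 * w - 1)) (hr : q * (r - 1) = ξ * z₁ * (q ^ 2 * r - 1))
    (hs : q * (s - 1) = ξ * z₂ * (q ^ 2 * s - 1)) (ht : q * (w - t) = ξ * z₃ * (q ^ 2 * w - t))
    (hx : x = ξ ^ 2) (hy : y * (q ^ 2 * w - 1) ^ 2 = (q ^ 2 - 1) ^ 2 * w) :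
    y * (z₂ - z₁) * z₃ * Ztri (m + 2) x y z₁ z₂ z₃ * Zun (m + 1) x y =
      (z₁ - 1) * ((z₂ - 1) * (z₃ - 1) - y * z₂ * z₃) *
          Zadj (m + 2) x y z₁ z₃ * Zsing (m + 1) x y z₂
      - (z₂ - 1) * (x * (z₁ - 1) * (z₃ - 1) - y) * z₁ * z₃ *
          Zbaradj (m + 2) x y z₂ z₃ * Zsing (m + 1) x y z₁
      - (z₁ - 1) * (z₂ - 1) * (z₃ - 1) * Zsing (m + 1) x y z₂ * Zun (m + 1) x y
      + (z₁ - 1) * (z₂ - 1) * (z₃ - 1) * z₁ * z₂ ^ (m + 1) * (x * z₃) ^ (m + 2) *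
          Zsing (m + 1) x y z₁ * Zun (m + 1) x y := by
  have hξ' : ξ = q * (w - 1) / (q ^ 2 * w - 1) := by
    rw [eq_div_iff ha, hw]
  have hξ : ξ ≠ 0 := by
    rw [hξ']
    exact div_ne_zero (mul_ne_zero hq0 hw1) ha
  have hz₁ : z₁ = (r - 1) * (q ^ 2 * w - 1) / ((w - 1) * (q ^ 2 * r - 1)) := by
    rw [eq_div_iff (mul_ne_zero hw1 har)]
    refine mul_left_cancel₀ hq0 (mul_left_cancel₀ hξ ?_)
    linear_combination -ξ * (q ^ 2 * w - 1) * hr + ξ * z₁ * (q ^ 2 * r - 1) * hw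
  have hz₂ : z₂ = (s - 1) * (q ^ 2 * w - 1) / ((w - 1) * (q ^ 2 * s - 1)) := by
    rw [eq_div_iff (mul_ne_zero hw1 has)]
    refine mul_left_cancel₀ hq0 (mul_left_cancel₀ hξ ?_)
    linear_combination -ξ * (q ^ 2 * w - 1) * hs + ξ * z₂ * (q ^ 2 * s - 1) * hw
  have hz₃ : z₃ = (w - t) * (q ^ 2 * w - 1) / ((w - 1) * (q ^ 2 * w - t)) := by
    rw [eq_div_iff (mul_ne_zero hw1 hat)]
    refine mul_left_cancel₀ hq0 (mul_left_cancel₀ hξ ?_)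
    linear_combination -ξ * (q ^ 2 * w - 1) * ht + ξ * z₃ * (q ^ 2 * w - t) * hw
  have hy' : y = (q ^ 2 - 1) ^ 2 * w / (q ^ 2 * w - 1) ^ 2 := by
    rw [eq_div_iff (pow_ne_zero 2 ha), hy]
  obtain ⟨c₁, hc₁⟩ : ∃ c₁, c₁ = (r - t) * (w - 1) / ((r - 1) * (w - t)) := ⟨_, rfl⟩
  obtain ⟨c₂, hc₂⟩ : ∃ c₂, c₂ = (q ^ 2 * w - 1) * (q ^ 2 * s - t) /
    ((q ^ 2 * s - 1) * (q ^ 2 * w - t)) := ⟨_, rfl⟩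
  have h := refinedSum_three_term (c₁ := c₁) (c₂ := c₂) m hξ hq hr0 hs0 hw0 ha har has hat hw hr
    hs ht hx hy (by rw [hc₁, hz₁, hz₃, hξ']; field_simp) (by rw [hc₂]; field_simp)
  have hun : refinedSum m x y 1 1 1 1 1 = Zun (m + 1) x y := refinedSum_one_one ..
  have hadj : Ztri (m + 2) x y z₁ 1 z₃ = Zadj (m + 2) x y z₁ z₃ := rfl
  have hbar : Ztri (m + 2) x y 1 z₂ z₃ = Zbaradj (m + 2) x y z₂ z₃ := Zqua_halfTurn ..
  have hsing : ∀ z, refinedSum m x y z 1 1 1 1 = Zsing (m + 1) x y z :=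
    fun z => refinedSum_one_one ..
  have hsun : Zsing (m + 1) x y 1 = Zun (m + 1) x y := rfl
  rw [refinedSum_expand', refinedSum_expand', refinedSum_expand', hun, hsing, hsing, hsun, hadj,
    hbar] at h
  obtain ⟨κ, hκ⟩ : ∃ κ, κ = -((r - t) * (q ^ 2 * s - t) * (w - 1) ^ 3 * (q ^ 2 * w - 1) *
    (q ^ 2 * r - 1) ^ 2 * (q ^ 2 * s - 1) * (q ^ 2 * w - t)) /
      ((r - 1) * (w - t) * (q ^ 2 - 1) ^ 3 * w) := ⟨_, rfl⟩
  have hκ0 : κ ≠ 0 := by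
    rw [hκ]
    simp [*]
  have d₁ : z₁ - 1 = (q ^ 2 - 1) * (r - w) / ((w - 1) * (q ^ 2 * r - 1)) := by
    rw [hz₁, div_sub_one (mul_ne_zero hw1 har)]
    ring
  have d₂ : z₂ - 1 = (q ^ 2 - 1) * (s - w) / ((w - 1) * (q ^ 2 * s - 1)) := by
    rw [hz₂, div_sub_one (mul_ne_zero hw1 has)]
    ring
  have d₃ : z₃ - 1 = (q ^ 2 - 1) * w * (1 - t) / ((w - 1) * (q ^ 2 * w - t)) := by
    rw [hz₃, div_sub_one (mul_ne_zero hw1 hat)]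
    ring
  have d₂₁ : z₂ - z₁ = (q ^ 2 - 1) * (s - r) * (q ^ 2 * w - 1) /
      ((w - 1) * ((q ^ 2 * r - 1) * (q ^ 2 * s - 1))) := by
    rw [hz₁, hz₂, div_sub_div _ _ (mul_ne_zero hw1 has) (mul_ne_zero hw1 har), div_eq_div_iff]
    · ring
    all_goals simp [*]
  have e₁ : 1 - c₁ = (r - w) * (1 - t) / ((r - 1) * (w - t)) := by
    rw [hc₁, one_sub_div (mul_ne_zero hr1 hwt)]
    ring
  have e₂ : 1 - c₂ = q ^ 2 * (s - w) * (1 - t) / ((q ^ 2 * s - 1) * (q ^ 2 * w - t)) := by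
    rw [hc₂, one_sub_div (mul_ne_zero has hat)]
    ring
  have n₃ : (z₂ - 1) * (z₃ - 1) - y * z₂ * z₃ = -((s - t) * (q ^ 2 - 1) ^ 2 * w) /
      ((w - 1) * ((q ^ 2 * s - 1) * (q ^ 2 * w - t))) := by
    rw [d₂, d₃, hy', hz₂, hz₃]
    generalize q ^ 2 * w - 1 = a at ha ⊢
    generalize q ^ 2 * r - 1 = a₁ at har ⊢
    generalize q ^ 2 * s - 1 = a₂ at has ⊢
    generalize q ^ 2 * w - t = a₃ at hat ⊢
    generalize q ^ 2 * s - t = b₂ at hst ⊢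
    generalize q ^ 2 * r - t = b₁
    generalize q ^ 2 - 1 = k at hq ⊢
    field_simp
    ring
  have n₄ : x * (z₁ - 1) * (z₃ - 1) - y = -((q ^ 2 * r - t) * (q ^ 2 - 1) ^ 2 * w) /
      ((q ^ 2 * w - 1) * ((q ^ 2 * r - 1) * (q ^ 2 * w - t))) := by
    rw [d₁, d₃, hx, hξ', hy']
    generalize ha' : q ^ 2 * w - 1 = a at ha ⊢
    generalize har' : q ^ 2 * r - 1 = a₁ at har ⊢
    generalize has' : q ^ 2 * s - 1 = a₂ at has ⊢
    generalize hat' : q ^ 2 * w - t = a₃ at hat ⊢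
    generalize hst' : q ^ 2 * s - t = b₂ at hst ⊢
    generalize hrt' : q ^ 2 * r - t = b₁
    generalize q ^ 2 - 1 = k at hq ⊢
    field_simp
    subst ha' har' has' hat' hst' hrt'
    ring
  have k₁ : (r - s) * ((q ^ 2 * w - t) * (w - t)) * ((q ^ 2 * r - 1) * (q ^ 2 * s - 1)) *
      (c₁ * c₂) = κ * (y * (z₂ - z₁) * z₃) := by
    rw [hκ, hc₁, hc₂, hy', d₂₁, hz₃]
    generalize q ^ 2 * w - 1 = a at ha ⊢
    generalize q ^ 2 * r - 1 = a₁ at har ⊢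
    generalize q ^ 2 * s - 1 = a₂ at has ⊢
    generalize q ^ 2 * w - t = a₃ at hat ⊢
    generalize q ^ 2 * s - t = b₂ at hst ⊢
    generalize q ^ 2 * r - t = b₁
    generalize q ^ 2 - 1 = k at hq ⊢
    field_simp
    ring
  have k₂ : (w - r) * ((q ^ 2 * s - t) * (s - t)) * ((q ^ 2 * w - 1) * (q ^ 2 * r - 1)) * c₁ =
      -(κ * ((z₁ - 1) * ((z₂ - 1) * (z₃ - 1) - y * z₂ * z₃))) := by
    rw [hκ, hc₁, d₁, n₃]
    generalize q ^ 2 * w - 1 = a at ha ⊢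
    generalize q ^ 2 * r - 1 = a₁ at har ⊢
    generalize q ^ 2 * s - 1 = a₂ at has ⊢
    generalize q ^ 2 * w - t = a₃ at hat ⊢
    generalize q ^ 2 * s - t = b₂ at hst ⊢
    generalize q ^ 2 * r - t = b₁
    generalize q ^ 2 - 1 = k at hq ⊢
    field_simp
    ring
  have k₃ : (s - w) * ((q ^ 2 * r - t) * (r - t)) * ((q ^ 2 * w - 1) * (q ^ 2 * s - 1)) * c₂ =
      κ * ((z₂ - 1) * (x * (z₁ - 1) * (z₃ - 1) - y) * z₁ * z₃) := by
    rw [hκ, hc₂, d₂, n₄, hz₁, hz₃]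
    generalize q ^ 2 * w - 1 = a at ha ⊢
    generalize q ^ 2 * r - 1 = a₁ at har ⊢
    generalize q ^ 2 * s - 1 = a₂ at has ⊢
    generalize q ^ 2 * w - t = a₃ at hat ⊢
    generalize q ^ 2 * s - t = b₂ at hst ⊢
    generalize q ^ 2 * r - t = b₁
    generalize q ^ 2 - 1 = k at hq ⊢
    field_simp
  have k₄ : (r - s) * ((q ^ 2 * w - t) * (w - t)) * ((q ^ 2 * r - 1) * (q ^ 2 * s - 1)) *
      (c₂ * (1 - c₁)) + (w - r) * ((q ^ 2 * s - t) * (s - t)) *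
        ((q ^ 2 * w - 1) * (q ^ 2 * r - 1)) * (1 - c₁) =
      κ * ((z₁ - 1) * (z₂ - 1) * (z₃ - 1)) := by
    rw [hκ, e₁, hc₂, d₁, d₂, d₃]
    generalize q ^ 2 * w - 1 = a at ha ⊢
    generalize q ^ 2 * r - 1 = a₁ at har ⊢
    generalize q ^ 2 * s - 1 = a₂ at has ⊢
    generalize q ^ 2 * w - t = a₃ at hat ⊢
    generalize q ^ 2 * s - t = b₂ at hst ⊢
    generalize q ^ 2 * r - t = b₁
    generalize q ^ 2 - 1 = k at hq ⊢
    field_simp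
    ring
  have k₅ : (r - s) * ((q ^ 2 * w - t) * (w - t)) * ((q ^ 2 * r - 1) * (q ^ 2 * s - 1)) *
      (c₁ * (1 - c₂)) * z₁ + (s - w) * ((q ^ 2 * r - t) * (r - t)) *
        ((q ^ 2 * w - 1) * (q ^ 2 * s - 1)) * (1 - c₂) =
      -(κ * ((z₁ - 1) * (z₂ - 1) * (z₃ - 1) * z₁ * (x * z₃))) := by
    rw [hκ, hc₁, e₂, d₁, d₂, d₃, hz₁, hx, hξ', hz₃]
    generalize ha' : q ^ 2 * w - 1 = a at ha ⊢
    generalize har' : q ^ 2 * r - 1 = a₁ at har ⊢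
    generalize has' : q ^ 2 * s - 1 = a₂ at has ⊢
    generalize hat' : q ^ 2 * w - t = a₃ at hat ⊢
    generalize hst' : q ^ 2 * s - t = b₂ at hst ⊢
    generalize hrt' : q ^ 2 * r - t = b₁
    generalize q ^ 2 - 1 = k at hq ⊢
    field_simp
    subst ha' har' has' hat' hst' hrt'
    ring
  generalize Ztri (m + 2) x y z₁ z₂ z₃ = T at *
  generalize Zun (m + 1) x y = U at *
  generalize Zadj (m + 2) x y z₁ z₃ = A at *
  generalize Zbaradj (m + 2) x y z₂ z₃ = B at *
  generalize Zsing (m + 1) x y z₁ = S₁ at *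
  generalize Zsing (m + 1) x y z₂ = S₂ at *
  have hp : (x * z₃) ^ (m + 2) = x ^ (m + 1) * z₃ ^ (m + 1) * (x * z₃) := by ring
  rw [hp]
  simp only [one_pow, one_mul, mul_one, sub_self, zero_mul, add_zero] at h
  generalize x ^ (m + 1) = X at h ⊢
  generalize z₂ ^ (m + 1) = Z₂ at h ⊢
  generalize z₃ ^ (m + 1) = Z₃ at h ⊢
  clear hκ hc₁ hc₂ hξ' hz₁ hz₂ hz₃ d₁ d₂ d₃ d₂₁ e₁ e₂ n₃ n₄ hw hr hs ht
  refine mul_left_cancel₀ hκ0 ?_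
  linear_combination h - T * U * k₁ - A * S₂ * k₂ - B * S₁ * k₃ - S₂ * U * k₄ -
    S₁ * U * (X * Z₂ * Z₃) * k₅

end Parametrized

section Generic

/-- The identity for the triply-refined generating function, for generic elements of an
algebraically closed field. -/
theorem Ztri_identity_of_generic {K : Type*} [Field K] [IsAlgClosed K] {x y z₁ z₂ z₃ : K} (m : ℕ)
    (hx0 : x ≠ 0) (hy0 : y ≠ 0) (hz₁ : z₁ ≠ 0) (hz₃ : z₃ ≠ 0)
    (hxy : (1 + x - y) ^ 2 - 4 * x ≠ 0)
    (h₁ : 1 - (1 + x - y) * z₁ + x * z₁ ^ 2 ≠ 0)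
    (h₂ : 1 - (1 + x - y) * z₂ + x * z₂ ^ 2 ≠ 0)
    (h₃ : 1 - (1 + x - y) * z₃ + x * z₃ ^ 2 ≠ 0)
    (h₁₃ : (z₁ - 1) * (z₃ - 1) - y * z₁ * z₃ ≠ 0)
    (h₂₃ : x * (z₂ - 1) * (z₃ - 1) - y ≠ 0) :
    y * (z₂ - z₁) * z₃ * Ztri (m + 2) x y z₁ z₂ z₃ * Zun (m + 1) x y =
      (z₁ - 1) * ((z₂ - 1) * (z₃ - 1) - y * z₂ * z₃) *
          Zadj (m + 2) x y z₁ z₃ * Zsing (m + 1) x y z₂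
      - (z₂ - 1) * (x * (z₁ - 1) * (z₃ - 1) - y) * z₁ * z₃ *
          Zbaradj (m + 2) x y z₂ z₃ * Zsing (m + 1) x y z₁
      - (z₁ - 1) * (z₂ - 1) * (z₃ - 1) * Zsing (m + 1) x y z₂ * Zun (m + 1) x y
      + (z₁ - 1) * (z₂ - 1) * (z₃ - 1) * z₁ * z₂ ^ (m + 1) * (x * z₃) ^ (m + 2) *
          Zsing (m + 1) x y z₁ * Zun (m + 1) x y := by
  obtain ⟨ξ, hξ⟩ := IsAlgClosed.exists_pow_nat_eq x (n := 2) two_pos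
  have hξ0 : ξ ≠ 0 := by rintro rfl; exact hx0 (by simp [← hξ])
  obtain ⟨q, hq⟩ : ∃ q, ξ * q ^ 2 - (1 + x - y) * q + ξ = 0 := by
    obtain ⟨q, hq⟩ := IsAlgClosed.exists_root
      (Polynomial.C ξ * Polynomial.X ^ 2 + Polynomial.C (-(1 + x - y)) * Polynomial.X +
        Polynomial.C ξ) (by rw [Polynomial.degree_quadratic hξ0]; decide)
    refine ⟨q, ?_⟩
    simp only [Polynomial.IsRoot, Polynomial.eval_add, Polynomial.eval_mul, Polynomial.eval_C,
      Polynomial.eval_pow, Polynomial.eval_X] at hq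
    linear_combination hq
  have hq0 : q ≠ 0 := by
    rintro rfl
    exact hξ0 (by simpa using hq)
  have hq1 : q ^ 2 - 1 ≠ 0 := by
    intro h
    refine hxy (mul_left_cancel₀ (pow_ne_zero 2 hq0) ?_)
    linear_combination -((1 + x - y) * q + ξ * (q ^ 2 + 1)) * hq + ξ ^ 2 * (q ^ 2 - 1) * h +
      4 * q ^ 2 * hξ
  have hroot : ∀ z, 1 - (1 + x - y) * z + x * z ^ 2 ≠ 0 →
      ξ * z * q - 1 ≠ 0 ∧ ξ * z - q ≠ 0 := by
    refine fun z hz => ⟨fun h => hz (mul_left_cancel₀ hq0 ?_),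
      fun h => hz (mul_left_cancel₀ hq0 ?_)⟩
    · linear_combination (ξ * z - q) * h + z * hq - q * z ^ 2 * hξ
    · linear_combination (ξ * z * q - 1) * h + z * hq - q * z ^ 2 * hξ
  obtain ⟨a₁, b₁⟩ := hroot z₁ h₁
  obtain ⟨a₂, b₂⟩ := hroot z₂ h₂
  obtain ⟨a₃, b₃⟩ := hroot z₃ h₃
  obtain ⟨a₀, b₀⟩ := hroot 1 (by convert hy0 using 1; ring)
  rw [mul_one] at a₀ b₀
  have hinv : ∀ z, ξ * z * q - 1 ≠ 0 → ∀ r, r = (ξ * z - q) / (q * (ξ * z * q - 1)) →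
      q ^ 2 * r - 1 = (1 - q ^ 2) / (ξ * z * q - 1) := by
    rintro z hz r rfl
    generalize ha : ξ * z * q - 1 = a at hz ⊢
    field_simp
    subst ha
    ring
  have hinv' : ∀ z, ξ * z * q - 1 ≠ 0 → ∀ r, r = (ξ * z - q) / (q * (ξ * z * q - 1)) →
      r - 1 = ξ * z * (1 - q ^ 2) / (q * (ξ * z * q - 1)) := by
    rintro z hz r rfl
    generalize ha : ξ * z * q - 1 = a at hz ⊢
    field_simp
    subst ha
    ring
  have hk : 1 - q ^ 2 ≠ 0 := fun h => hq1 (by linear_combination -h)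
  obtain ⟨w, hw⟩ : ∃ w, w = (ξ * 1 - q) / (q * (ξ * 1 * q - 1)) := ⟨_, rfl⟩
  obtain ⟨r, hr⟩ : ∃ r, r = (ξ * z₁ - q) / (q * (ξ * z₁ * q - 1)) := ⟨_, rfl⟩
  obtain ⟨s, hs⟩ : ∃ s, s = (ξ * z₂ - q) / (q * (ξ * z₂ * q - 1)) := ⟨_, rfl⟩
  have wa := hinv 1 (by simpa using a₀) w hw
  have ra := hinv z₁ a₁ r hr
  have sa := hinv z₂ a₂ s hs
  have w1 := hinv' 1 (by simpa using a₀) w hw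
  have r1 := hinv' z₁ a₁ r hr
  have s1 := hinv' z₂ a₂ s hs
  rw [mul_one] at hw wa w1
  have hw0 : w ≠ 0 := hw ▸ div_ne_zero b₀ (mul_ne_zero hq0 a₀)
  obtain ⟨t, ht⟩ : ∃ t, t = q * w * (ξ * z₃ * q - 1) / (ξ * z₃ - q) := ⟨_, rfl⟩
  have ta : q ^ 2 * w - t = w * q * (1 - q ^ 2) / (ξ * z₃ - q) := by
    rw [ht]
    generalize ha : ξ * z₃ - q = a at b₃ ⊢
    field_simp
    subst ha
    ring
  have t1 : w - t = w * (ξ * z₃) * (1 - q ^ 2) / (ξ * z₃ - q) := by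
    rw [ht]
    generalize ha : ξ * z₃ - q = a at b₃ ⊢
    field_simp
    subst ha
    ring
  have hy : y = (1 - ξ * q) * (q - ξ) / q := by
    rw [eq_div_iff hq0]
    linear_combination hq - q * hξ
  have hrt : r - t = (q ^ 2 - 1) * x * ((z₁ - 1) * (z₃ - 1) - y * z₁ * z₃) /
      (ξ * (ξ * z₁ * q - 1) * (ξ * q - 1) * (ξ * z₃ - q)) := by
    rw [ht, hr, hw, hy, ← hξ]
    generalize ha : ξ * z₃ - q = a at b₃ ⊢
    generalize hb : ξ * q - 1 = b at a₀ ⊢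
    generalize hc : ξ * z₁ * q - 1 = c at a₁ ⊢
    field_simp
    subst ha hb hc
    ring
  have hst : q ^ 2 * s - t = q * (q ^ 2 - 1) * (x * (z₂ - 1) * (z₃ - 1) - y) /
      ((ξ * z₂ * q - 1) * (ξ * q - 1) * (ξ * z₃ - q)) := by
    rw [ht, hs, hw, hy, ← hξ]
    generalize ha : ξ * z₃ - q = a at b₃ ⊢
    generalize hb : ξ * q - 1 = b at a₀ ⊢
    generalize hc : ξ * z₂ * q - 1 = c at a₂ ⊢
    field_simp
    subst ha hb hc
    ring
  refine Ztri_identity_of_param (q := q) (w := w) (ξ := ξ) (r := r) (s := s) (t := t) m hq0 hq1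
    ?_ ?_ hw0 ?_ ?_ ?_ ?_ ?_ ?_ ?_ ?_ ?_ ?_ ?_ ?_ ?_ hξ.symm ?_
  · exact hr ▸ div_ne_zero b₁ (mul_ne_zero hq0 a₁)
  · exact hs ▸ div_ne_zero b₂ (mul_ne_zero hq0 a₂)
  · exact wa ▸ div_ne_zero hk a₀
  · exact ra ▸ div_ne_zero hk a₁
  · exact sa ▸ div_ne_zero hk a₂
  · exact ta ▸ div_ne_zero (mul_ne_zero (mul_ne_zero hw0 hq0) hk) b₃
  · exact r1 ▸ div_ne_zero (mul_ne_zero (mul_ne_zero hξ0 hz₁) hk) (mul_ne_zero hq0 a₁)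
  · exact w1 ▸ div_ne_zero (mul_ne_zero hξ0 hk) (mul_ne_zero hq0 a₀)
  · exact t1 ▸ div_ne_zero (mul_ne_zero (mul_ne_zero hw0 (mul_ne_zero hξ0 hz₃)) hk) b₃
  · exact hrt ▸ div_ne_zero (mul_ne_zero (mul_ne_zero hq1 hx0) h₁₃)
      (mul_ne_zero (mul_ne_zero (mul_ne_zero hξ0 a₁) a₀) b₃)
  · exact hst ▸ div_ne_zero (mul_ne_zero (mul_ne_zero hq0 hq1) h₂₃)
      (mul_ne_zero (mul_ne_zero a₂ a₀) b₃)
  · rw [wa, w1]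
    field_simp
  · rw [ra, r1]
    field_simp
  · rw [sa, s1]
    field_simp
  · rw [ta, t1]
    field_simp
  · rw [wa, hw, hy]
    field_simp
    ring

end Generic

section Transfer

theorem RingHom.map_Zqua {R S : Type*} [CommRing R] [CommRing S] (φ : R →+* S) (n : ℕ)
    (x y z₁ z₂ z₃ z₄ : R) :
    φ (Zqua n x y z₁ z₂ z₃ z₄) = Zqua n (φ x) (φ y) (φ z₁) (φ z₂) (φ z₃) (φ z₄) := by
  classical
  simp only [Zqua, map_sum, apply_ite φ, map_mul, map_pow, map_zero]

theorem IsDomain.exists_injective_isAlgClosed (A : Type) [CommRing A] [IsDomain A] :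
    ∃ (K : Type) (_ : Field K) (_ : IsAlgClosed K) (φ : A →+* K), Function.Injective φ := by
  refine ⟨AlgebraicClosure (FractionRing A), inferInstance, inferInstance,
    (algebraMap (FractionRing A) _).comp (algebraMap A _), ?_⟩
  rw [RingHom.coe_comp]
  exact (algebraMap (FractionRing A) (AlgebraicClosure (FractionRing A))).injective.comp
    (IsFractionRing.injective A (FractionRing A))

open MvPolynomial in
theorem Ztri_identity_mvPolynomial (m : ℕ) {x y z₁ z₂ z₃ : MvPolynomial (Fin 5) ℤ}
    (hx : x = X 0) (hy : y = X 1) (hz₁ : z₁ = X 2) (hz₂ : z₂ = X 3) (hz₃ : z₃ = X 4) :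
    y * (z₂ - z₁) * z₃ * Ztri (m + 2) x y z₁ z₂ z₃ * Zun (m + 1) x y =
      (z₁ - 1) * ((z₂ - 1) * (z₃ - 1) - y * z₂ * z₃) *
          Zadj (m + 2) x y z₁ z₃ * Zsing (m + 1) x y z₂
      - (z₂ - 1) * (x * (z₁ - 1) * (z₃ - 1) - y) * z₁ * z₃ *
          Zbaradj (m + 2) x y z₂ z₃ * Zsing (m + 1) x y z₁
      - (z₁ - 1) * (z₂ - 1) * (z₃ - 1) * Zsing (m + 1) x y z₂ * Zun (m + 1) x y
      + (z₁ - 1) * (z₂ - 1) * (z₃ - 1) * z₁ * z₂ ^ (m + 1) * (x * z₃) ^ (m + 2) *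
          Zsing (m + 1) x y z₁ * Zun (m + 1) x y := by
  obtain ⟨K, _, _, φ, hφ⟩ := IsDomain.exists_injective_isAlgClosed (MvPolynomial (Fin 5) ℤ)
  have hne : ∀ p : MvPolynomial (Fin 5) ℤ, eval ![1, 2, 2, 2, 2] p ≠ 0 → φ p ≠ 0 :=
    fun p hp h => hp (by rw [(map_eq_zero_iff φ hφ).1 h, map_zero])
  have hm : ∀ p, φ p ≠ 0 → ∀ {k}, φ p = k → k ≠ 0 :=
    fun p hp k h => h ▸ hp
  have key := Ztri_identity_of_generic (x := φ x) (y := φ y) (z₁ := φ z₁) (z₂ := φ z₂)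
    (z₃ := φ z₃) m (hne _ (by simp [*])) (hne _ (by simp [*])) (hne _ (by simp [*]))
    (hne _ (by simp [*]))
    (hm _ (hne ((1 + x - y) ^ 2 - 4 * x) (by simp [*])) (by simp [map_ofNat φ 4]))
    (hm _ (hne (1 - (1 + x - y) * z₁ + x * z₁ ^ 2) (by simp [*])) (by simp))
    (hm _ (hne (1 - (1 + x - y) * z₂ + x * z₂ ^ 2) (by simp [*])) (by simp))
    (hm _ (hne (1 - (1 + x - y) * z₃ + x * z₃ ^ 2) (by simp [*])) (by simp))
    (hm _ (hne ((z₁ - 1) * (z₃ - 1) - y * z₁ * z₃) (by simp [*])) (by simp))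
    (hm _ (hne (x * (z₂ - 1) * (z₃ - 1) - y) (by simp [*])) (by simp))
  refine hφ ?_
  simpa only [Ztri, Zadj, Zbaradj, Zsing, Zun, map_add, map_sub, map_mul, map_pow, map_one,
    RingHom.map_Zqua] using key

end Transfer

/-- Second identity for the triply-refined ASM generating function, stated for
all values of the variables in any commutative ring, equivalently as an
identity of polynomials in `ℤ[x,y,z1,z2,z3]`. -/
theorem stmt4 {R : Type*} [CommRing R] (x y z1 z2 z3 : R) (n : ℕ) (hn : 2 ≤ n) :
    y * (z2 - z1) * z3 * Ztri n x y z1 z2 z3 * Zun (n - 1) x y =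
      (z1 - 1) * ((z2 - 1) * (z3 - 1) - y * z2 * z3) *
          Zadj n x y z1 z3 * Zsing (n - 1) x y z2
      - (z2 - 1) * (x * (z1 - 1) * (z3 - 1) - y) * z1 * z3 *
          Zbaradj n x y z2 z3 * Zsing (n - 1) x y z1
      - (z1 - 1) * (z2 - 1) * (z3 - 1) * Zsing (n - 1) x y z2 * Zun (n - 1) x y
      + (z1 - 1) * (z2 - 1) * (z3 - 1) * z1 * z2 ^ (n - 1) * (x * z3) ^ n *
          Zsing (n - 1) x y z1 * Zun (n - 1) x y := by
  obtain ⟨m, rfl⟩ := Nat.exists_eq_add_of_le' hn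
  have h := congrArg (MvPolynomial.eval₂Hom (Int.castRingHom R) ![x, y, z1, z2, z3])
    (Ztri_identity_mvPolynomial m rfl rfl rfl rfl rfl)
  simp only [Ztri, Zadj, Zbaradj, Zsing, Zun, map_add, map_sub, map_mul, map_pow, map_one,
    RingHom.map_Zqua, MvPolynomial.coe_eval₂Hom, MvPolynomial.eval₂_X] at h
  exact h
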